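/- arXiv:2605.27312 — 2 statements merged into one kernel-verified Lean document; each statement's English description precedes it below -/
import Mathlib

section
/- Let n ≥ 3 and m ≥ 1 be integers. For 1 ≤ r ≤ m−1, the automorphism group of the dual Berman code DB_n(r,m) (equivalently, of the Berman code B_n(r,m)) equals the wreath product S_n ≀ S_m in its product action on the coordinate set [n]^m. For r ∈ {0, m}, the automorphism group of DB_n(r,m) (equivalently, of B_n(r,m)) equals the full symmetric group S_{n^m}. -/
open Matrix

/-- The automorphism group of a binary code of length `|I|` (as a set of coordinate
permutations): those permutations of the index set that map the code onto itself. -/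
def codeAut {I : Type} (C : Set (I → ZMod 2)) : Set (Equiv.Perm I) :=
  { π | (fun c => c ∘ ⇑π.symm) '' C = C }

/-- The wreath product `S_α ≀ S_m` in its product action on `[α]^m`, realized as the
set of permutations of `Fin m → α` of the form `x ↦ (k ↦ σ_k (x (π⁻¹ k)))`. -/
def wreathPermSet (α : Type) (m : ℕ) : Set (Equiv.Perm (Fin m → α)) :=
  { f | ∃ (σ : Fin m → Equiv.Perm α) (π : Equiv.Perm (Fin m)),
      ∀ (x : Fin m → α) (k : Fin m), f x k = σ k (x (π⁻¹ k)) }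

/-- The dual Berman code `DB_n(r, m)`, defined recursively.  Coordinates are indexed by
`[n]^m = (Fin m → Fin n)`; the first coordinate of the index is the block index of the
concatenation `(u + u_0 | u + u_1 | … | u + u_{n-2} | u)`. -/
def bermanDual (n : ℕ) : (m : ℕ) → ℕ → Set ((Fin m → Fin n) → ZMod 2)
  | 0, _ => Set.univ
  | m + 1, 0 => { c | ∃ x : ZMod 2, ∀ v, c v = x }
  | m + 1, r + 1 =>
      if m + 1 ≤ r + 1 then Set.univ
      else
        { c | ∃ (u : (Fin m → Fin n) → ZMod 2)
                (w : Fin n → (Fin m → Fin n) → ZMod 2),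
            u ∈ bermanDual n m (r + 1) ∧
            (∀ l : Fin n, (l : ℕ) < n - 1 → w l ∈ bermanDual n m r) ∧
            (∀ l : Fin n, (l : ℕ) = n - 1 → w l = 0) ∧
            ∀ v : Fin (m + 1) → Fin n,
              c v = u (fun k => v k.succ) + w (v 0) (fun k => v k.succ) }

/-- The dual of a binary code. -/
def dualCode {I : Type} [Fintype I] (C : Set (I → ZMod 2)) : Set (I → ZMod 2) :=
  { c | ∀ d ∈ C, ∑ i, c i * d i = 0 }

/-- The Berman code `B_n(r, m)` is the dual code of the dual Berman code `DB_n(r, m)`. -/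
def berman (n m r : ℕ) : Set ((Fin m → Fin n) → ZMod 2) :=
  dualCode (bermanDual n m r)

/-!
`DB_n(r, m)` is the span of the functions on `[n]^m` that depend on at most `r` coordinates. For
`n ≥ 3` its words of minimum weight `n^(m-r)` are exactly the functions supported on a subcube of
codimension `r`: by induction on `m`, any two of the `n` blocks of a codeword differ by a codeword
of `DB_n(r-1, m-1)`, and two distinct blocks of weight `n^(m-r-1)` would differ by a word of weight
at most `2 n^(m-r-1) < n^(m-r)`, which is too small. Hence a code automorphism permutes the
subcubes of codimension `r`. Exactly `(m - d(x, y)).choose r` of them contain both `x` and `y`, so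
for `1 ≤ r ≤ m - 1` an automorphism preserves Hamming distance one, is therefore an isometry of
the Hamming space, and lies in the wreath product. Finally, a linear code and its dual have the
same automorphisms.
-/

section Hamming

open Function Finset

variable {ι α κ β : Type*} [Fintype ι] [DecidableEq α] [Fintype κ] [DecidableEq β]

lemma hammingDist_eq_one_iff [DecidableEq ι] {x y : ι → α} :
    hammingDist x y = 1 ↔ ∃ i, ∃ a ≠ x i, y = update x i a := by
  rw [hammingDist, card_eq_one]
  refine exists_congr fun i ↦ ⟨fun h ↦ ?_, ?_⟩
  · have differ_iff (j : ι) : x j ≠ y j ↔ j = i := by simpa using congrArg (j ∈ ·) h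
    refine ⟨y i, ((differ_iff i).2 rfl).symm, funext fun j ↦ ?_⟩
    grind [update_apply]
  · rintro ⟨a, ha, rfl⟩
    grind [update_apply]

lemma hammingDist_update_update_le_one_iff [DecidableEq ι] {x : ι → α} {i j : ι} {a b : α}
    (ha : a ≠ x i) (hb : b ≠ x j) :
    hammingDist (update x i a) (update x j b) ≤ 1 ↔ i = j := by
  constructor
  · intro h
    by_contra hij
    have two_differ : {i, j} ⊆ ({k | update x i a k ≠ update x j b k} : Finset ι) := by
      grind [update_apply]
    have := card_le_card two_differ
    rw [card_pair hij] at this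
    exact absurd (this.trans h) (by norm_num)
  · rintro rfl
    have differ_only : ({k | update x i a k ≠ update x i b k} : Finset ι) ⊆ {i} := by
      grind [update_apply]
    exact (card_le_card differ_only).trans_eq (card_singleton i)

lemma hammingDist_update_lt_iff [DecidableEq ι] {x y : ι → α} {i : ι} {a : α} (ha : a ≠ y i) :
    hammingDist x (update y i a) < hammingDist x y ↔ x i = a := by
  constructor
  · contrapose!
    intro hxa
    exact card_le_card fun j hj ↦ by grind [update_apply]
  · rintro rfl
    refine card_lt_card ((ssubset_iff_of_subset fun j hj ↦ ?_).2 ⟨i, ?_, ?_⟩) <;>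
      grind [update_apply]

lemma hammingDist_map_le {f : (ι → α) → κ → β}
    (hf : ∀ x y, hammingDist x y = 1 → hammingDist (f x) (f y) ≤ 1) (x y : ι → α) :
    hammingDist (f x) (f y) ≤ hammingDist x y := by
  classical
  induction hd : hammingDist x y using Nat.strong_induction_on generalizing y with | _ d ih
  subst hd
  obtain rfl | hxy := eq_or_ne x y
  · simp
  obtain ⟨i, hi⟩ := Function.ne_iff.1 hxy
  set z := update y i (x i)
  have closer : hammingDist x z < hammingDist x y := (hammingDist_update_lt_iff hi).2 rfl
  have adjacent : hammingDist z y = 1 := by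
    rw [hammingDist_comm]
    exact hammingDist_eq_one_iff.2 ⟨i, x i, hi, rfl⟩
  calc hammingDist (f x) (f y)
      ≤ hammingDist (f x) (f z) + hammingDist (f z) (f y) := hammingDist_triangle _ _ _
    _ ≤ hammingDist x z + 1 := Nat.add_le_add (ih _ closer z rfl) (hf z y adjacent)
    _ ≤ hammingDist x y := closer

lemma hammingDist_map_eq_of_adj_iff {f : (ι → α) ≃ (κ → β)}
    (hf : ∀ x y, hammingDist (f x) (f y) = 1 ↔ hammingDist x y = 1) (x y : ι → α) :
    hammingDist (f x) (f y) = hammingDist x y := by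
  refine (hammingDist_map_le (fun x y h ↦ ((hf x y).2 h).le) x y).antisymm ?_
  simpa using hammingDist_map_le (f := f.symm)
    (fun u v h ↦ ((hf _ _).1 (by simpa using h)).le) (f x) (f y)

variable [DecidableEq ι] {f : Equiv.Perm (ι → α)}

lemma exists_update_of_hammingDist_map_eq
    (hf : ∀ x y, hammingDist (f x) (f y) = hammingDist x y) (x : ι → α) {i : ι} {a : α}
    (ha : a ≠ x i) : ∃ k, ∃ b ≠ f x k, f (update x i a) = update (f x) k b :=
  hammingDist_eq_one_iff.1 <| (hf _ _).trans <| hammingDist_eq_one_iff.2 ⟨i, a, ha, rfl⟩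

lemma exists_injective_forall_update [Nontrivial α]
    (hf : ∀ x y, hammingDist (f x) (f y) = hammingDist x y) (x : ι → α) :
    ∃ τ : ι → ι, Injective τ ∧
      ∀ i, ∀ a ≠ x i, ∃ b ≠ f x (τ i), f (update x i a) = update (f x) (τ i) b := by
  have same_direction_iff {i j k l : ι} {a b c d : α} (ha : a ≠ x i) (hb : b ≠ x j)
      (hc : c ≠ f x k) (hd : d ≠ f x l) (hac : f (update x i a) = update (f x) k c)
      (hbd : f (update x j b) = update (f x) l d) : k = l ↔ i = j := by
    rw [← hammingDist_update_update_le_one_iff hc hd, ← hac, ← hbd, hf,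
      hammingDist_update_update_le_one_iff ha hb]
  choose a₀ ha₀ using fun i ↦ exists_ne (x i)
  choose τ b hb hτ using fun i ↦ exists_update_of_hammingDist_map_eq hf x (ha₀ i)
  refine ⟨τ, fun i j hij ↦ ?_, fun i a ha ↦ ?_⟩
  · exact (same_direction_iff (ha₀ i) (ha₀ j) (hb i) (hb j) (hτ i) (hτ j)).1 hij
  · obtain ⟨k, c, hc, hk⟩ := exists_update_of_hammingDist_map_eq hf x ha
    obtain rfl := (same_direction_iff ha (ha₀ i) hc (hb i) hk (hτ i)).2 rfl
    exact ⟨c, hc, hk⟩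

/- For `a ≠ x i`, the equality `y i = a` is metric: it says that `update x i a` is closer to `y`
than `x` is. -/
lemma apply_eq_apply_update [Nontrivial α]
    (hf : ∀ x y, hammingDist (f x) (f y) = hammingDist x y) {x : ι → α} {τ : ι → ι}
    (hτ : ∀ i, ∀ a ≠ x i, ∃ b ≠ f x (τ i), f (update x i a) = update (f x) (τ i) b)
    (y : ι → α) (i : ι) : f y (τ i) = f (update x i (y i)) (τ i) := by
  have coord_iff {a b : α} {j : ι} (ha : a ≠ x j) (hb : b ≠ f x (τ i))
      (h : f (update x j a) = update (f x) (τ i) b) : f y (τ i) = b ↔ y j = a := by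
    rw [← hammingDist_update_lt_iff hb, ← h, hf, hf, hammingDist_update_lt_iff ha]
  by_cases hyi : y i = x i
  · rw [hyi, update_eq_self]
    by_contra hne
    have hf_symm (u v) : hammingDist (f.symm u) (f.symm v) = hammingDist u v := by
      rw [← hf]; simp
    obtain ⟨j, a, ha, h⟩ := exists_update_of_hammingDist_map_eq hf_symm (f x) hne
    rw [Equiv.symm_apply_apply] at ha h
    have h' : f (update x j a) = update (f x) (τ i) (f y (τ i)) := by simp [← h]
    obtain ⟨c, hc⟩ := exists_ne (x i)
    obtain ⟨b, hb, hcb⟩ := hτ i c hc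
    have hij : i = j := by
      rw [← hammingDist_update_update_le_one_iff hc ha, ← hf, h', hcb]
      exact (hammingDist_update_update_le_one_iff hb hne).2 rfl
    subst hij
    exact ha (((coord_iff ha hne h').1 rfl).symm.trans hyi)
  · obtain ⟨b, hb, h⟩ := hτ i (y i) hyi
    rw [h, update_self]
    exact (coord_iff hyi hb h).2 rfl

end Hamming

section WreathProduct

open Function

variable {α : Type} {m : ℕ} {f : Equiv.Perm (Fin m → α)}

lemma mem_wreathPermSet_of_forall_apply_eq {s : Fin m → α → α} {π : Equiv.Perm (Fin m)}
    (hf : ∀ x k, f x k = s k (x (π⁻¹ k))) : f ∈ wreathPermSet α m := by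
  have bijective (k : Fin m) : Bijective (s k) := by
    constructor
    · intro a b hab
      have : f (fun _ ↦ a) = f (update (fun _ ↦ a) (π⁻¹ k) b) := by
        ext j
        rw [hf, hf]
        obtain rfl | hjk := eq_or_ne j k
        · simpa using hab
        · rw [update_of_ne (π⁻¹.injective.ne hjk)]
      simpa using congrFun (f.injective this) (π⁻¹ k)
    · intro b
      obtain ⟨x, hx⟩ := f.surjective fun _ ↦ b
      exact ⟨x (π⁻¹ k), by rw [← hf, hx]⟩
  exact ⟨fun k ↦ Equiv.ofBijective (s k) (bijective k), π, hf⟩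

lemma symm_mem_wreathPermSet (hf : f ∈ wreathPermSet α m) : f.symm ∈ wreathPermSet α m := by
  obtain ⟨σ, π, h⟩ := hf
  refine ⟨fun k ↦ (σ (π k))⁻¹, π⁻¹, fun x k ↦ ?_⟩
  rw [inv_inv, Equiv.Perm.eq_inv_iff_eq]
  simpa using (h (f.symm x) (π k)).symm

theorem mem_wreathPermSet_of_adj_iff [Nontrivial α] [DecidableEq α]
    (hf : ∀ x y, hammingDist (f x) (f y) = 1 ↔ hammingDist x y = 1) : f ∈ wreathPermSet α m := by
  have isometry := hammingDist_map_eq_of_adj_iff hf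
  obtain ⟨a⟩ : Nonempty α := inferInstance
  obtain ⟨τ, τ_injective, hτ⟩ := exists_injective_forall_update isometry fun _ ↦ a
  let π : Equiv.Perm (Fin m) := Equiv.ofBijective τ (Finite.injective_iff_bijective.1 τ_injective)
  refine mem_wreathPermSet_of_forall_apply_eq (π := π)
    (s := fun k b ↦ f (update (fun _ ↦ a) (π⁻¹ k) b) k) fun x k ↦ ?_
  obtain ⟨i, rfl⟩ := π.surjective k
  rw [Equiv.Perm.coe_inv, Equiv.symm_apply_apply]
  exact apply_eq_apply_update isometry hτ x i

end WreathProduct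

section Subcube

open Function Finset

variable {ι α : Type*}

/-- The subcube of the Hamming space `ι → α` through `a` in which the coordinates in `S` are
fixed; its codimension is `#S`. -/
def subcube (S : Finset ι) (a : ι → α) : Set (ι → α) :=
  {x | ∀ i ∈ S, x i = a i}

/-- The family of all subcubes of codimension `r`; their indicators turn out to be the words of
minimum weight of the dual Berman codes. -/
def subcubes (ι α : Type*) (r : ℕ) : Set (Set (ι → α)) :=
  {C | ∃ S a, #S = r ∧ subcube S a = C}

lemma subcube_eq_of_mem {S : Finset ι} {a x : ι → α} (hx : x ∈ subcube S a) :
    subcube S x = subcube S a :=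
  Set.ext fun _ ↦ forall₂_congr fun i hi ↦ by rw [hx i hi]

lemma subcube_left_injective [Nontrivial α] (x : ι → α) :
    Injective fun S ↦ subcube S x := by
  classical
  have subset {S T : Finset ι} (h : subcube T x ⊆ subcube S x) : S ⊆ T := by
    intro i hiS
    by_contra hiT
    obtain ⟨a, ha⟩ := exists_ne (x i)
    have mem : update x i a ∈ subcube T x := fun j hj ↦
      update_of_ne (ne_of_mem_of_not_mem hj hiT) _ _
    exact ha (by simpa using h mem i hiS)
  exact fun S T h ↦ (subset h.ge).antisymm (subset h.le)

lemma ncard_subcube [Fintype ι] [Fintype α] (S : Finset ι) (a : ι → α) :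
    (subcube S a).ncard = Fintype.card α ^ (Fintype.card ι - #S) := by
  classical
  have eq_piFinset : subcube S a = Fintype.piFinset fun i ↦ if i ∈ S then {a i} else univ := by
    ext x
    simp only [subcube, Set.mem_ofPred_eq, mem_coe, Fintype.mem_piFinset]
    refine forall_congr' fun i ↦ ?_
    split_ifs with hi <;> simp [hi]
  rw [eq_piFinset, Set.ncard_coe_finset, Fintype.card_piFinset]
  simp only [apply_ite card, card_singleton, card_univ]
  rw [prod_ite, prod_const_one, one_mul, prod_const, filter_not, filter_univ_mem,
    ← compl_eq_univ_sdiff, card_compl]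

variable [Fintype ι] [DecidableEq α]

lemma card_filter_eq_add_hammingDist_eq_card (x y : ι → α) :
    #{i | x i = y i} + hammingDist x y = Fintype.card ι :=
  card_filter_add_card_filter_not _

variable [Nontrivial α]

lemma ncard_subcubes_through (r : ℕ) (x y : ι → α) :
    {C ∈ subcubes ι α r | x ∈ C ∧ y ∈ C}.ncard
      = (Fintype.card ι - hammingDist x y).choose r := by
  classical
  have eq_image : {C ∈ subcubes ι α r | x ∈ C ∧ y ∈ C}
      = (subcube · x) '' (powersetCard r {i | x i = y i} : Finset (Finset ι)) := by
    ext C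
    simp only [Set.mem_ofPred_eq, Set.mem_image, mem_coe, mem_powersetCard]
    constructor
    · rintro ⟨⟨S, a, hS, rfl⟩, hx, hy⟩
      refine ⟨S, ⟨fun i hi ↦ ?_, hS⟩, subcube_eq_of_mem hx⟩
      simp [hx i hi, hy i hi]
    · rintro ⟨S, ⟨agree, hS⟩, rfl⟩
      refine ⟨⟨S, x, hS, rfl⟩, fun _ _ ↦ rfl, fun i hi ↦ ?_⟩
      simpa [eq_comm] using agree hi
  rw [eq_image, Set.ncard_image_of_injective _ (subcube_left_injective x), Set.ncard_coe_finset,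
    card_powersetCard, ← card_filter_eq_add_hammingDist_eq_card x y, Nat.add_sub_cancel]

lemma choose_lt_choose_of_lt {k n r : ℕ} (hr : 1 ≤ r) (hrn : r ≤ n) (hkn : k < n) :
    k.choose r < n.choose r := by
  obtain ⟨n, rfl⟩ : ∃ n', n = n' + 1 := ⟨n - 1, by lia⟩
  obtain ⟨r, rfl⟩ : ∃ r', r = r' + 1 := ⟨r - 1, by lia⟩
  calc k.choose (r + 1)
      ≤ n.choose (r + 1) := Nat.choose_le_choose _ (by lia)
    _ < n.choose r + n.choose (r + 1) := Nat.lt_add_of_pos_left (Nat.choose_pos (by lia))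
    _ = (n + 1).choose (r + 1) := (Nat.choose_succ_succ' n r).symm

lemma hammingDist_eq_one_iff_ncard_subcubes_through {r : ℕ} (hr : 1 ≤ r)
    (hr' : r < Fintype.card ι) (x y : ι → α) :
    hammingDist x y = 1 ↔ x ≠ y ∧
      {C ∈ subcubes ι α r | x ∈ C ∧ y ∈ C}.ncard = (Fintype.card ι - 1).choose r := by
  rw [ncard_subcubes_through, ← hammingDist_pos]
  constructor
  · intro h
    rw [h]
    exact ⟨one_pos, rfl⟩
  · rintro ⟨hpos, hchoose⟩
    by_contra hne
    exact (choose_lt_choose_of_lt hr (by lia) (by lia)).ne hchoose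

lemma hammingDist_map_eq_one_iff_of_preimage_mem_subcubes {r : ℕ} (hr : 1 ≤ r)
    (hr' : r < Fintype.card ι) {f : Equiv.Perm (ι → α)}
    (hf : ∀ C, f ⁻¹' C ∈ subcubes ι α r ↔ C ∈ subcubes ι α r) (x y : ι → α) :
    hammingDist (f x) (f y) = 1 ↔ hammingDist x y = 1 := by
  have through_eq_image : {C ∈ subcubes ι α r | x ∈ C ∧ y ∈ C}
      = (f ⁻¹' ·) '' {C ∈ subcubes ι α r | f x ∈ C ∧ f y ∈ C} := by
    ext C
    obtain ⟨D, rfl⟩ := f.injective.preimage_surjective C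
    rw [f.surjective.preimage_injective.mem_set_image]
    exact and_congr_left' (hf D)
  simp only [hammingDist_eq_one_iff_ncard_subcubes_through hr hr', through_eq_image,
    Set.ncard_image_of_injective _ f.surjective.preimage_injective, f.injective.ne_iff]

end Subcube

section JuntaSpan

open Function Finset Submodule

variable {R ι κ α β : Type*} [CommRing R] {r s : ℕ}

/-- The `R`-span of the functions of `ι → α` depending on at most `r` coordinates (the
`r`-juntas). For `R = ZMod 2` this is a recursion-free description of the dual Berman code of
order `r`, see `bermanDual_eq_juntaSpan`. -/
def juntaSpan (R ι α : Type*) [CommRing R] (r : ℕ) : Submodule R ((ι → α) → R) :=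
  span R {f | ∃ S : Finset ι, #S ≤ r ∧ DependsOn f S}

lemma mem_juntaSpan_of_dependsOn {f : (ι → α) → R} {S : Finset ι} (hS : #S ≤ r)
    (hf : DependsOn f S) : f ∈ juntaSpan R ι α r :=
  subset_span ⟨S, hS, hf⟩

lemma juntaSpan_eq_top [Fintype ι] (hr : Fintype.card ι ≤ r) : juntaSpan R ι α r = ⊤ :=
  eq_top_iff.2 fun f _ ↦
    mem_juntaSpan_of_dependsOn (S := univ) hr (by simpa using dependsOn_univ f)

lemma juntaSpan_zero : juntaSpan R ι α 0 = R ∙ (1 : (ι → α) → R) := by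
  apply le_antisymm
  · refine span_le.2 ?_
    rintro f ⟨S, hS, hf⟩
    obtain rfl : S = ∅ := card_eq_zero.1 (Nat.le_zero.1 hS)
    obtain _ | ⟨⟨x⟩⟩ := isEmpty_or_nonempty (ι → α)
    · rw [Subsingleton.elim f 0]
      exact zero_mem _
    · refine mem_span_singleton.2 ⟨f x, funext fun y ↦ ?_⟩
      simpa using hf (x := x) (y := y) (by simp)
  · rw [span_singleton_le_iff_mem]
    exact mem_juntaSpan_of_dependsOn (S := ∅) le_rfl fun _ _ _ ↦ rfl

lemma mul_mem_juntaSpan {f g : (ι → α) → R} (hf : f ∈ juntaSpan R ι α r)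
    (hg : g ∈ juntaSpan R ι α s) : f * g ∈ juntaSpan R ι α (r + s) := by
  classical
  have mul_le : juntaSpan R ι α r * juntaSpan R ι α s ≤ juntaSpan R ι α (r + s) := by
    rw [juntaSpan, juntaSpan, span_mul_span, span_le]
    rintro _ ⟨u, ⟨S, hS, hu⟩, v, ⟨T, hT, hv⟩, rfl⟩
    refine mem_juntaSpan_of_dependsOn (S := S ∪ T) ((card_union_le S T).trans (by lia)) ?_
    exact fun x y h ↦ congrArg₂ (· * ·) (hu fun i hi ↦ h i (mem_union_left T hi))
      (hv fun i hi ↦ h i (mem_union_right S hi))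
  exact mul_le (Submodule.mul_mem_mul hf hg)

lemma comp_mem_juntaSpan {g : (ι → α) → κ → β} {P : κ → Finset ι} (hP : ∀ k, #(P k) ≤ 1)
    (hg : ∀ k, DependsOn (fun x ↦ g x k) (P k)) {f : (κ → β) → R}
    (hf : f ∈ juntaSpan R κ β r) : f ∘ g ∈ juntaSpan R ι α r := by
  classical
  have le_comap : juntaSpan R κ β r ≤ (juntaSpan R ι α r).comap (LinearMap.funLeft R R g) := by
    refine span_le.2 ?_
    rintro u ⟨S, hS, hu⟩
    refine mem_juntaSpan_of_dependsOn (S := S.biUnion P) ?_ fun x y hxy ↦ hu fun k hk ↦ ?_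
    · simpa using (card_biUnion_le_card_mul S P 1 fun k _ ↦ hP k).trans (by simpa using hS)
    · exact hg k fun i hi ↦ hxy i (mem_biUnion.2 ⟨k, hk, hi⟩)
  exact le_comap hf

lemma indicator_subcube_mem_juntaSpan (S : Finset ι) (a : ι → α) :
    (subcube S a).indicator 1 ∈ juntaSpan R ι α #S := by
  classical
  refine mem_juntaSpan_of_dependsOn le_rfl fun x y hxy ↦ ?_
  have mem_iff : x ∈ subcube S a ↔ y ∈ subcube S a :=
    forall₂_congr fun i hi ↦ by rw [hxy i hi]
  simp only [Set.indicator_apply, mem_iff, Pi.one_apply]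

variable {m : ℕ}

/-- The restriction of a function on `Fin (m + 1) → α` to the hyperplane where coordinate `0`
equals `l`: block `l` of a codeword written as a concatenation. -/
def block (l : α) : ((Fin (m + 1) → α) → R) →ₗ[R] ((Fin m → α) → R) :=
  LinearMap.funLeft R R (Fin.cons (α := fun _ ↦ α) l)

lemma block_apply_tail (f : (Fin (m + 1) → α) → R) (v : Fin (m + 1) → α) :
    block (v 0) f (Fin.tail v) = f v :=
  congrArg f (Fin.cons_self_tail v)

lemma eq_zero_of_forall_block_eq_zero {f : (Fin (m + 1) → α) → R} (hf : ∀ l, block l f = 0) :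
    f = 0 :=
  funext fun v ↦ by rw [← block_apply_tail f, hf, Pi.zero_apply, Pi.zero_apply]

lemma block_mem_juntaSpan (l : α) {f : (Fin (m + 1) → α) → R}
    (hf : f ∈ juntaSpan R (Fin (m + 1)) α r) : block l f ∈ juntaSpan R (Fin m) α r := by
  refine comp_mem_juntaSpan (P := Fin.cases ∅ fun i ↦ {i}) (fun k ↦ ?_) (fun k ↦ ?_) hf
  · cases k using Fin.cases <;> simp
  · cases k using Fin.cases with
    | zero => exact fun x y _ ↦ rfl
    | succ i => exact fun x y hxy ↦ hxy i (by simp)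

lemma comp_tail_mem_juntaSpan {f : (Fin m → α) → R} (hf : f ∈ juntaSpan R (Fin m) α r) :
    f ∘ Fin.tail ∈ juntaSpan R (Fin (m + 1)) α r :=
  comp_mem_juntaSpan (P := fun k ↦ {k.succ}) (fun _ ↦ (card_singleton _).le)
    (fun k _ _ hxy ↦ hxy k.succ (by simp)) hf

lemma block_sub_block_mem_juntaSpan (l l' : α) {f : (Fin (m + 1) → α) → R}
    (hf : f ∈ juntaSpan R (Fin (m + 1)) α (r + 1)) :
    block l f - block l' f ∈ juntaSpan R (Fin m) α r := by
  have le_comap : juntaSpan R (Fin (m + 1)) α (r + 1)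
      ≤ (juntaSpan R (Fin m) α r).comap (block l - block l') := by
    refine span_le.2 ?_
    rintro u ⟨S, hS, hu⟩
    have agree {a b : α} {x y : Fin m → α} (h0 : 0 ∈ S → a = b)
        (hxy : ∀ i, i.succ ∈ S → x i = y i) : block a u x = block b u y :=
      hu fun i hi ↦ by
        cases i using Fin.cases with
        | zero => simpa using h0 hi
        | succ i => simpa using hxy i hi
    by_cases h0 : 0 ∈ S
    · have card_tail : #{i : Fin m | i.succ ∈ S} ≤ r := by
        have := Fin.card_filter_univ_succ (· ∈ S)
        rw [if_pos h0, filter_univ_mem] at this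
        lia
      have mem (a : α) : block a u ∈ juntaSpan R (Fin m) α r :=
        mem_juntaSpan_of_dependsOn card_tail fun x y hxy ↦
          agree (fun _ ↦ rfl) fun i hi ↦ hxy i (by simpa using hi)
      exact sub_mem (mem l) (mem l')
    · have blocks_eq : block l u = block l' u :=
        funext fun x ↦ agree (fun h ↦ absurd h h0) fun _ _ ↦ rfl
      simp only [SetLike.mem_coe, mem_comap, LinearMap.sub_apply, blocks_eq, sub_self, zero_mem]
  exact le_comap hf

theorem mem_juntaSpan_succ_iff [Finite α] (t : α) {f : (Fin (m + 1) → α) → R} :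
    f ∈ juntaSpan R (Fin (m + 1)) α (r + 1) ↔
      block t f ∈ juntaSpan R (Fin m) α (r + 1) ∧
        ∀ l, block l f - block t f ∈ juntaSpan R (Fin m) α r := by
  classical
  cases nonempty_fintype α
  refine ⟨fun hf ↦ ⟨block_mem_juntaSpan t hf, fun l ↦ block_sub_block_mem_juntaSpan l t hf⟩, ?_⟩
  rintro ⟨ht, hsub⟩
  let head (l : α) : (Fin (m + 1) → α) → R := fun v ↦ if v 0 = l then 1 else 0
  have head_mem (l : α) : head l ∈ juntaSpan R (Fin (m + 1)) α 1 :=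
    mem_juntaSpan_of_dependsOn (S := {0}) le_rfl fun x y hxy ↦ by simp [head, hxy 0]
  have decomposition : f
      = block t f ∘ Fin.tail + ∑ l, (block l f - block t f) ∘ Fin.tail * head l := by
    funext v
    simp [head, block_apply_tail]
  rw [decomposition]
  exact add_mem (comp_tail_mem_juntaSpan ht) <| sum_mem fun l _ ↦
    mul_mem_juntaSpan (comp_tail_mem_juntaSpan (hsub l)) (head_mem l)

theorem bermanDual_eq_juntaSpan {n : ℕ} (hn : 0 < n) (m r : ℕ) :
    bermanDual n m r = juntaSpan (ZMod 2) (Fin m) (Fin n) r := by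
  induction m generalizing r with
  | zero => rw [juntaSpan_eq_top (by simp), top_coe, bermanDual]
  | succ m ih =>
    cases r with
    | zero =>
      ext c
      simp only [bermanDual, juntaSpan_zero, SetLike.mem_coe, mem_span_singleton, funext_iff]
      simp [eq_comm]
    | succ r =>
      rw [bermanDual]
      split_ifs with hmr
      · rw [juntaSpan_eq_top (by simpa using hmr), top_coe]
      let t : Fin n := ⟨n - 1, by lia⟩
      ext c
      simp only [ih, SetLike.mem_coe, mem_juntaSpan_succ_iff t, Set.mem_ofPred_eq]
      constructor
      · rintro ⟨u, w, hu, hw, hw_last, hc⟩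
        have block_eq (l : Fin n) : block l c = u + w l :=
          funext fun x ↦ hc (Fin.cons l x)
        have block_last : block t c = u := by rw [block_eq, hw_last t rfl, add_zero]
        refine ⟨block_last ▸ hu, fun l ↦ ?_⟩
        rw [block_last, block_eq, add_sub_cancel_left]
        obtain hl | hl := (Nat.le_sub_one_of_lt l.isLt).lt_or_eq
        · exact hw l hl
        · exact hw_last l hl ▸ zero_mem _
      · rintro ⟨ht, hsub⟩
        refine ⟨block t c, fun l ↦ block l c - block t c, ht, fun l _ ↦ hsub l, ?_, fun v ↦ ?_⟩
        · intro l hl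
          obtain rfl : l = t := Fin.ext hl
          exact sub_self _
        · exact ((add_sub_cancel _ _).trans (block_apply_tail c v)).symm

end JuntaSpan

section MinimumWeight

open Function Finset

variable {R α : Type*} {m r : ℕ}

lemma univ_mem_subcubes_zero {ι : Type*} [Nonempty α] : Set.univ ∈ subcubes ι α 0 :=
  ⟨∅, fun _ ↦ Classical.arbitrary α, card_empty, by simp [subcube]⟩

lemma tail_preimage_mem_subcubes {C : Set (Fin m → α)} [Nonempty α]
    (hC : C ∈ subcubes (Fin m) α r) : Fin.tail ⁻¹' C ∈ subcubes (Fin (m + 1)) α r := by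
  obtain ⟨S, a, hS, rfl⟩ := hC
  refine ⟨S.map (Fin.succEmb m), Fin.cons (Classical.arbitrary α) a, by simpa using hS, ?_⟩
  ext v
  simp [subcube, Fin.tail]

lemma head_eq_inter_tail_preimage_mem_subcubes {C : Set (Fin m → α)} (l : α)
    (hC : C ∈ subcubes (Fin m) α r) :
    {v | v 0 = l} ∩ Fin.tail ⁻¹' C ∈ subcubes (Fin (m + 1)) α (r + 1) := by
  obtain ⟨S, a, hS, rfl⟩ := hC
  refine ⟨insert 0 (S.map (Fin.succEmb m)), Fin.cons l a, ?_, ?_⟩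
  · rw [card_insert_of_notMem (by simp [Fin.succ_ne_zero]), card_map, hS]
  · ext v
    simp [subcube, Fin.tail]

variable [CommRing R]

lemma support_eq_univ_of_mem_juntaSpan_zero {ι : Type*} {f : (ι → α) → R}
    (hf : f ∈ juntaSpan R ι α 0) (hf0 : f ≠ 0) : support f = Set.univ := by
  rw [juntaSpan_zero, Submodule.mem_span_singleton] at hf
  obtain ⟨c, rfl⟩ := hf
  have hc : c ≠ 0 := fun hc ↦ hf0 (by rw [hc, zero_smul])
  exact Set.eq_univ_of_forall fun x ↦ by simpa using hc

lemma support_eq_of_forall_block_eq {f : (Fin (m + 1) → α) → R} {g : (Fin m → α) → R}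
    (hf : ∀ l, block l f = g) : support f = Fin.tail ⁻¹' support g := by
  ext v
  rw [mem_support, ← block_apply_tail f, hf, Set.mem_preimage, mem_support]

lemma support_eq_of_forall_block_eq_zero {f : (Fin (m + 1) → α) → R} {l : α}
    (hf : ∀ l' ≠ l, block l' f = 0) :
    support f = {v | v 0 = l} ∩ Fin.tail ⁻¹' support (block l f) := by
  ext v
  rw [mem_support, ← block_apply_tail f, Set.mem_inter_iff, Set.mem_ofPred_eq, Set.mem_preimage,
    mem_support]
  obtain rfl | hv := eq_or_ne (v 0) l
  · simp
  · simp [hf _ hv, hv]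

variable [Fintype α] [DecidableEq R]

lemma hammingNorm_eq_ncard_support {ι : Type*} [Fintype ι] (f : ι → R) :
    hammingNorm f = (support f).ncard := by
  rw [hammingNorm, ← Set.ncard_coe_finset, coe_filter_univ]
  rfl

lemma hammingNorm_eq_sum_block (f : (Fin (m + 1) → α) → R) :
    hammingNorm f = ∑ l, hammingNorm (block l f) := by
  simp only [hammingNorm, card_filter]
  rw [← (Fin.consEquiv fun _ ↦ α).sum_comp, Fintype.sum_prod_type]
  rfl

lemma card_pow_le_hammingNorm {f : (Fin m → α) → R} (hf : f ∈ juntaSpan R (Fin m) α r)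
    (hf0 : f ≠ 0) : Fintype.card α ^ (m - r) ≤ hammingNorm f := by
  induction m generalizing r with
  | zero => simpa [Nat.one_le_iff_ne_zero] using hf0
  | succ m ih =>
    cases r with
    | zero =>
      simp [hammingNorm_eq_ncard_support, support_eq_univ_of_mem_juntaSpan_zero hf hf0]
    | succ r =>
      obtain ⟨l, hl⟩ : ∃ l, block l f ≠ 0 := by
        by_contra! h
        exact hf0 (eq_zero_of_forall_block_eq_zero h)
      rw [Nat.add_sub_add_right, hammingNorm_eq_sum_block]
      by_cases hzero : ∃ t, block t f = 0
      · obtain ⟨t, ht⟩ := hzero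
        have block_mem : block l f ∈ juntaSpan R (Fin m) α r := by
          simpa [ht] using block_sub_block_mem_juntaSpan l t hf
        exact (ih block_mem hl).trans
          (single_le_sum_of_canonicallyOrdered (f := fun l ↦ hammingNorm (block l f)) (mem_univ l))
      · push Not at hzero
        have card_pos : 0 < Fintype.card α := Fintype.card_pos_iff.2 ⟨l⟩
        calc Fintype.card α ^ (m - r)
            ≤ Fintype.card α ^ (m - (r + 1) + 1) := Nat.pow_le_pow_right card_pos (by lia)
          _ = ∑ _l : α, Fintype.card α ^ (m - (r + 1)) := by
            rw [sum_const, card_univ, smul_eq_mul, pow_succ']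
          _ ≤ ∑ l, hammingNorm (block l f) :=
            sum_le_sum fun l _ ↦ ih (block_mem_juntaSpan l hf) (hzero l)

lemma block_eq_block_of_hammingNorm_add_lt {f : (Fin (m + 1) → α) → R} {l l' : α}
    (hf : f ∈ juntaSpan R (Fin (m + 1)) α (r + 1))
    (hlt : hammingNorm (block l f) + hammingNorm (block l' f) < Fintype.card α ^ (m - r)) :
    block l f = block l' f := by
  by_contra hne
  refine hlt.not_ge ?_
  calc Fintype.card α ^ (m - r)
      ≤ hammingNorm (block l' f - block l f) :=
        card_pow_le_hammingNorm (block_sub_block_mem_juntaSpan l' l hf)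
          (sub_ne_zero.2 (Ne.symm hne))
    _ = hammingDist (block l f) (block l' f) := by
        rw [hammingDist_eq_hammingNorm, neg_add_eq_sub]
    _ ≤ hammingNorm (block l f) + hammingNorm (block l' f) := by
        simpa using hammingDist_triangle (block l f) 0 (block l' f)

variable {f : (Fin (m + 1) → α) → R}

lemma exists_forall_ne_block_eq_zero (hf : f ∈ juntaSpan R (Fin (m + 1)) α (r + 1)) {t : α}
    (ht : block t f = 0) (hnorm : hammingNorm f = Fintype.card α ^ (m - r)) :
    ∃ l, block l f ≠ 0 ∧ block l f ∈ juntaSpan R (Fin m) α r ∧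
      hammingNorm (block l f) = Fintype.card α ^ (m - r) ∧ ∀ l' ≠ l, block l' f = 0 := by
  classical
  have block_mem (l : α) : block l f ∈ juntaSpan R (Fin m) α r := by
    simpa [ht] using block_sub_block_mem_juntaSpan l t hf
  have card_pos : 0 < Fintype.card α := Fintype.card_pos_iff.2 ⟨t⟩
  obtain ⟨l, hl⟩ : ∃ l, block l f ≠ 0 := by
    by_contra! h
    rw [eq_zero_of_forall_block_eq_zero h, hammingNorm_zero] at hnorm
    exact (Nat.pow_pos card_pos).ne hnorm
  have sum_eq : hammingNorm (block l f) + ∑ l' ∈ univ.erase l, hammingNorm (block l' f)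
      = Fintype.card α ^ (m - r) := by
    rw [add_sum_erase univ (fun l ↦ hammingNorm (block l f)) (mem_univ l),
      ← hammingNorm_eq_sum_block, hnorm]
  have norm_ge := card_pow_le_hammingNorm (block_mem l) hl
  have rest_eq_zero : ∑ l' ∈ univ.erase l, hammingNorm (block l' f) = 0 := by lia
  refine ⟨l, hl, block_mem l, by lia, fun l' hl' ↦ ?_⟩
  exact hammingNorm_eq_zero.1 <| sum_eq_zero_iff.1 rest_eq_zero l' (by simpa using hl')

lemma hammingNorm_block_eq_of_forall_block_ne_zero (hα : 3 ≤ Fintype.card α) (hr : r ≤ m)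
    (hf : f ∈ juntaSpan R (Fin (m + 1)) α (r + 1)) (hne : ∀ l, block l f ≠ 0)
    (hnorm : hammingNorm f = Fintype.card α ^ (m - r)) :
    r + 1 ≤ m ∧ ∀ l, hammingNorm (block l f) = Fintype.card α ^ (m - (r + 1)) := by
  have block_norm_ge (l : α) : Fintype.card α ^ (m - (r + 1)) ≤ hammingNorm (block l f) :=
    card_pow_le_hammingNorm (block_mem_juntaSpan l hf) (hne l)
  have sum_const_eq :
      ∑ _l : α, Fintype.card α ^ (m - (r + 1)) = Fintype.card α ^ (m - (r + 1) + 1) := by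
    rw [sum_const, card_univ, smul_eq_mul, pow_succ']
  have sum_le : Fintype.card α ^ (m - (r + 1) + 1) ≤ Fintype.card α ^ (m - r) := by
    rw [← sum_const_eq, ← hnorm, hammingNorm_eq_sum_block]
    exact sum_le_sum fun l _ ↦ block_norm_ge l
  have hrm : r + 1 ≤ m := by
    have := (Nat.pow_le_pow_iff_right (by lia)).1 sum_le
    lia
  refine ⟨hrm, fun l ↦ ?_⟩
  rw [hammingNorm_eq_sum_block, show m - r = m - (r + 1) + 1 by lia, ← sum_const_eq] at hnorm
  exact ((sum_eq_sum_iff_of_le fun l _ ↦ block_norm_ge l).1 hnorm.symm l (mem_univ l)).symm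

lemma block_eq_block_of_forall_hammingNorm_eq (hα : 3 ≤ Fintype.card α) (hrm : r + 1 ≤ m)
    (hf : f ∈ juntaSpan R (Fin (m + 1)) α (r + 1))
    (hnorm : ∀ l, hammingNorm (block l f) = Fintype.card α ^ (m - (r + 1))) (l l' : α) :
    block l f = block l' f := by
  refine block_eq_block_of_hammingNorm_add_lt hf ?_
  have pow_pos : 0 < Fintype.card α ^ (m - (r + 1)) := Nat.pow_pos (by lia)
  calc hammingNorm (block l f) + hammingNorm (block l' f)
      = 2 * Fintype.card α ^ (m - (r + 1)) := by rw [hnorm, hnorm, two_mul]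
    _ < Fintype.card α * Fintype.card α ^ (m - (r + 1)) := Nat.mul_lt_mul_of_pos_right hα pow_pos
    _ = Fintype.card α ^ (m - r) := by rw [← pow_succ', show m - (r + 1) + 1 = m - r by lia]

theorem support_mem_subcubes_of_hammingNorm_eq (hα : 3 ≤ Fintype.card α) (hr : r ≤ m)
    {f : (Fin m → α) → R} (hf : f ∈ juntaSpan R (Fin m) α r)
    (hnorm : hammingNorm f = Fintype.card α ^ (m - r)) : support f ∈ subcubes (Fin m) α r := by
  have : Nonempty α := Fintype.card_pos_iff.1 (by lia)
  have hf0 : f ≠ 0 := by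
    rintro rfl
    exact (Nat.pow_pos Fintype.card_pos).ne' (hnorm.symm.trans hammingNorm_zero)
  induction m generalizing r with
  | zero =>
    obtain rfl := Nat.le_zero.1 hr
    exact support_eq_univ_of_mem_juntaSpan_zero hf hf0 ▸ univ_mem_subcubes_zero
  | succ m ih =>
    cases r with
    | zero => exact support_eq_univ_of_mem_juntaSpan_zero hf hf0 ▸ univ_mem_subcubes_zero
    | succ r =>
      rw [Nat.add_sub_add_right] at hnorm
      rw [Nat.add_le_add_iff_right] at hr
      by_cases hzero : ∃ t, block t f = 0
      · obtain ⟨t, ht⟩ := hzero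
        obtain ⟨l, block_ne, block_mem, block_norm, rest⟩ :=
          exists_forall_ne_block_eq_zero hf ht hnorm
        rw [support_eq_of_forall_block_eq_zero rest]
        exact head_eq_inter_tail_preimage_mem_subcubes l (ih hr block_mem block_norm block_ne)
      · push Not at hzero
        obtain ⟨hrm, block_norm⟩ :=
          hammingNorm_block_eq_of_forall_block_ne_zero hα hr hf hzero hnorm
        let t := Classical.arbitrary α
        rw [support_eq_of_forall_block_eq fun l ↦
          block_eq_block_of_forall_hammingNorm_eq hα hrm hf block_norm l t]
        exact tail_preimage_mem_subcubes (ih hrm (block_mem_juntaSpan t hf) (block_norm t)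
          (hzero t))

theorem mem_subcubes_iff (R : Type*) [CommRing R] [Nontrivial R] (hα : 3 ≤ Fintype.card α)
    (hr : r ≤ m) {C : Set (Fin m → α)} :
    C ∈ subcubes (Fin m) α r ↔
      C.ncard = Fintype.card α ^ (m - r) ∧ ∃ f ∈ juntaSpan R (Fin m) α r, support f = C := by
  classical
  constructor
  · rintro ⟨S, a, rfl, rfl⟩
    refine ⟨by simpa using ncard_subcube S a, _, indicator_subcube_mem_juntaSpan S a, ?_⟩
    simp [Set.support_indicator]
  · rintro ⟨hcard, f, hf, rfl⟩
    rw [← hammingNorm_eq_ncard_support] at hcard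
    exact support_mem_subcubes_of_hammingNorm_eq hα hr hf hcard

end MinimumWeight

section CodeAut

open Function

variable {I : Type} {C : Set (I → ZMod 2)} {π : Equiv.Perm I}

lemma mem_codeAut_iff : π ∈ codeAut C ↔ ∀ c, c ∘ π ∈ C ↔ c ∈ C := by
  have image_eq : (fun c : I → ZMod 2 ↦ c ∘ π.symm) '' C = (fun c ↦ c ∘ π) ⁻¹' C :=
    congrFun (Set.image_eq_preimage_of_inverse (fun c ↦ by simp [comp_assoc])
      fun c ↦ by simp [comp_assoc]) C
  rw [codeAut, Set.mem_ofPred_eq, image_eq, Set.ext_iff]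
  rfl

lemma codeAut_eq_univ_of_forall_comp_mem (hC : ∀ (π : Equiv.Perm I), ∀ c ∈ C, c ∘ π ∈ C) :
    codeAut C = Set.univ := by
  refine Set.eq_univ_of_forall fun π ↦ mem_codeAut_iff.2 fun c ↦ ⟨fun hc ↦ ?_, hC π c⟩
  simpa [comp_assoc] using hC π.symm _ hc

variable [Fintype I]

lemma codeAut_subset_codeAut_dualCode (C : Set (I → ZMod 2)) :
    codeAut C ⊆ codeAut (dualCode C) := by
  intro π hπ
  rw [mem_codeAut_iff] at hπ ⊢
  have sum_comp_mul_comp (c d : I → ZMod 2) : ∑ i, (c ∘ π) i * (d ∘ π) i = ∑ i, c i * d i :=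
    Equiv.sum_comp π fun i ↦ c i * d i
  refine fun c ↦ ⟨fun hc d hd ↦ ?_, fun hc d hd ↦ ?_⟩
  · rw [← sum_comp_mul_comp]
    exact hc _ ((hπ d).2 hd)
  · obtain ⟨d, rfl⟩ := π.injective.surjective_comp_right d
    rw [sum_comp_mul_comp]
    exact hc d ((hπ d).1 hd)

lemma dualCode_dualCode (C : Submodule (ZMod 2) (I → ZMod 2)) :
    dualCode (dualCode (C : Set (I → ZMod 2))) = C := by
  classical
  refine subset_antisymm (fun c hc ↦ ?_) fun c hc d hd ↦ ?_
  · by_contra hcC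
    obtain ⟨φ, hφc, hφC⟩ := Submodule.exists_le_ker_of_notMem hcC
    obtain ⟨d, rfl⟩ := (dotProductEquiv (ZMod 2) I).surjective φ
    refine hφc ((dotProduct_comm d c).trans (hc d fun e he ↦ hφC he))
  · exact (dotProduct_comm c d).trans (hd c hc)

theorem codeAut_dualCode (C : Submodule (ZMod 2) (I → ZMod 2)) :
    codeAut (dualCode (C : Set (I → ZMod 2))) = codeAut C := by
  refine (codeAut_subset_codeAut_dualCode _).antisymm' ?_
  simpa [dualCode_dualCode] using codeAut_subset_codeAut_dualCode (dualCode (C : Set (I → ZMod 2)))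

end CodeAut

section JuntaSpanAut

open Function

variable {α : Type} {m r : ℕ} {π : Equiv.Perm (Fin m → α)}

lemma comp_mem_juntaSpan_of_mem_wreathPermSet {R : Type*} [CommRing R]
    (hπ : π ∈ wreathPermSet α m) {f : (Fin m → α) → R} (hf : f ∈ juntaSpan R (Fin m) α r) :
    f ∘ π ∈ juntaSpan R (Fin m) α r := by
  obtain ⟨σ, τ, h⟩ := hπ
  refine comp_mem_juntaSpan (P := fun k ↦ {τ⁻¹ k}) (fun _ ↦ (Finset.card_singleton _).le)
    (fun k x y hxy ↦ ?_) hf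
  simp only [h, hxy (τ⁻¹ k) (by simp)]

lemma preimage_mem_subcubes_iff_of_mem_codeAut [Fintype α] (hα : 3 ≤ Fintype.card α) (hr : r ≤ m)
    (hπ : π ∈ codeAut (juntaSpan (ZMod 2) (Fin m) α r)) (C : Set (Fin m → α)) :
    π ⁻¹' C ∈ subcubes (Fin m) α r ↔ C ∈ subcubes (Fin m) α r := by
  simp only [mem_subcubes_iff (ZMod 2) hα hr]
  refine and_congr (by rw [Set.ncard_preimage_of_injective_subset_range π.injective (by simp)]) ?_
  rw [π.injective.surjective_comp_right.exists]
  refine exists_congr fun f ↦ and_congr (mem_codeAut_iff.1 hπ f) ?_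
  exact (congrArg (· = _) (support_comp_eq_preimage f π)).to_iff.trans
    π.surjective.preimage_injective.eq_iff

theorem codeAut_juntaSpan_eq_wreathPermSet [Fintype α] (hα : 3 ≤ Fintype.card α) (hr : 1 ≤ r)
    (hrm : r < m) :
    codeAut (juntaSpan (ZMod 2) (Fin m) α r : Set ((Fin m → α) → ZMod 2)) = wreathPermSet α m := by
  classical
  have : Nontrivial α := Fintype.one_lt_card_iff_nontrivial.1 (by lia)
  ext π
  constructor
  · intro hπ
    exact mem_wreathPermSet_of_adj_iff <| hammingDist_map_eq_one_iff_of_preimage_mem_subcubes hr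
      (by simpa using hrm) (preimage_mem_subcubes_iff_of_mem_codeAut hα hrm.le hπ)
  · intro hπ
    refine mem_codeAut_iff.2 fun c ↦ ⟨fun hc ↦ ?_, comp_mem_juntaSpan_of_mem_wreathPermSet hπ⟩
    simpa [comp_assoc] using
      comp_mem_juntaSpan_of_mem_wreathPermSet (symm_mem_wreathPermSet hπ) hc

lemma codeAut_juntaSpan_eq_univ (hr : r = 0 ∨ r = m) :
    codeAut (juntaSpan (ZMod 2) (Fin m) α r : Set ((Fin m → α) → ZMod 2)) = Set.univ := by
  refine codeAut_eq_univ_of_forall_comp_mem fun π c hc ↦ ?_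
  obtain rfl | rfl := hr
  · rw [SetLike.mem_coe, juntaSpan_zero, Submodule.mem_span_singleton] at hc ⊢
    obtain ⟨x, rfl⟩ := hc
    exact ⟨x, rfl⟩
  · simp [juntaSpan_eq_top]

end JuntaSpanAut

/-- For `n ≥ 3`, `m ≥ 1` and `1 ≤ r ≤ m − 1`, the automorphism group of
the dual Berman code `DB_n(r, m)` (equivalently, of the Berman code `B_n(r, m)`) is the
wreath product `S_n ≀ S_m` in its product action on `[n]^m`; for `r ∈ {0, m}` it is the
full symmetric group `S_{n^m}`. -/
theorem statement0 (n m : ℕ) (hn : 3 ≤ n) (hm : 1 ≤ m) (r : ℕ) :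
    (1 ≤ r → r ≤ m - 1 →
      codeAut (bermanDual n m r) = wreathPermSet (Fin n) m ∧
      codeAut (berman n m r) = wreathPermSet (Fin n) m) ∧
    ((r = 0 ∨ r = m) →
      codeAut (bermanDual n m r) = Set.univ ∧
      codeAut (berman n m r) = Set.univ) := by
  rw [berman, bermanDual_eq_juntaSpan (by lia), codeAut_dualCode, and_self, and_self]
  exact ⟨fun hr hrm ↦ codeAut_juntaSpan_eq_wreathPermSet (by simpa using hn) hr (by lia),
    codeAut_juntaSpan_eq_univ⟩
end

section
/- Let n ≥ 5 be odd, m ≥ 1, and W ⊆ {0,1,…,m}. If W is not a boundary case (i.e., W ∉ {∅, {0}, {1,…,m}, {0,1,…,m}}), then the automorphism group of the abelian code C(n,m,W) equals the wreath product S_n ≀ S_m in its product action on Z_n^m. If W is one of the boundary cases, then the automorphism group of C(n,m,W) is the full symmetric group S_{n^m}. -/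
open Matrix

/-- The abelian code `C(n, m, W)`: binary vectors indexed by `(Z_n)^m` whose finite-field
DFT (with respect to a primitive `n`-th root of unity `α` in a field `K` of characteristic 2)
vanishes at every frequency `j` whose Hamming weight lies outside `W`. -/
def abelianCode (n m : ℕ) [NeZero n] (W : Set ℕ) (K : Type) [Field K] (α : K) :
    Set ((Fin m → ZMod n) → ZMod 2) :=
  { a | ∀ j : Fin m → ZMod n, hammingNorm j ∉ W →
      ∑ i : Fin m → ZMod n, (if a i = 1 then (1 : K) else 0) * α ^ (∑ k, i k * j k).val = 0 }

/-- The four boundary cases of weight sets: `∅` (zero code), `{0}` (repetition code),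
`{1,…,m}` (single parity check code), `{0,1,…,m}` (full space). -/
def BoundaryW (m : ℕ) (W : Set ℕ) : Prop :=
  W = ∅ ∨ W = {0} ∨ W = Set.Icc 1 m ∨ W = Set.Iic m

/-!
The Fourier projection onto the code is a symmetric idempotent matrix over `ZMod 2` whose entry at
`(x, y)` depends only on the Hamming distance `d` of `x` and `y`: it is `f d = ∑ w ∈ W, d.choose w`.
A symmetric idempotent matrix is determined by its fixed vectors, so the automorphisms of the code
are exactly the permutations that preserve the colouring `f` of Hamming distances. Modulo two the
binomial transform is an involution, and it preserves constancy on `{1, …, m}`; hence `f` is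
constant on `{1, …, m}` precisely in the boundary cases.

If `f` is not constant there, consider the number of points `z` at which `f` separates `x` from
`y`. Let `x` and `y` differ in coordinate `i`, and let `x'` and `y'` be obtained from them by
exchanging their `i`-th coordinates. Line by line in direction `i`, twice the number for `(x, y)`
is at least the sum of the numbers for `(x, x')` and `(y, y')` (as soon as lines have four points),
and strictly larger (as soon as they have five) if `y` is not `x'`. So among the pairs of distinct
points the adjacent ones are those separated the least, and a permutation preserving `f` is an
automorphism of the Hamming graph. It then permutes the directions of edges in the same way at all
points, and therefore lies in the wreath product.
-/

section HammingGraph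

variable {ι β : Type*} {x y z w : ι → β} {i j k l : ι}

/-- `x` and `y` differ in coordinate `i` and in no other one, that is, they are joined by an edge of
direction `i` in the Hamming graph. -/
def DiffersOnlyAt (x y : ι → β) (i : ι) : Prop :=
  ∀ k, x k ≠ y k ↔ k = i

theorem DiffersOnlyAt.symm (h : DiffersOnlyAt x y i) : DiffersOnlyAt y x i :=
  fun k => ne_comm.trans (h k)

theorem DiffersOnlyAt.apply_ne (h : DiffersOnlyAt x y i) : x i ≠ y i :=
  (h i).2 rfl

theorem DiffersOnlyAt.apply_eq (h : DiffersOnlyAt x y i) (hk : k ≠ i) : x k = y k :=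
  not_not.1 fun hne => hk ((h k).1 hne)

theorem DiffersOnlyAt.ne (h : DiffersOnlyAt x y i) : x ≠ y :=
  fun hxy => h.apply_ne (congrFun hxy i)

theorem DiffersOnlyAt.unique (hi : DiffersOnlyAt x y i) (hj : DiffersOnlyAt x y j) : i = j :=
  (hj i).1 hi.apply_ne

theorem differsOnlyAt_update_update [DecidableEq ι] {c d : β} (hcd : c ≠ d) :
    DiffersOnlyAt (Function.update x i c) (Function.update x i d) i := by
  intro k
  rcases eq_or_ne k i with rfl | hk <;> simp [*]

theorem differsOnlyAt_update [DecidableEq ι] {c : β} (hc : x i ≠ c) :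
    DiffersOnlyAt x (Function.update x i c) i := by
  simpa only [Function.update_eq_self] using differsOnlyAt_update_update (x := x) (i := i) hc

theorem DiffersOnlyAt.trans_of_ne (hxy : DiffersOnlyAt x y i) (hxz : DiffersOnlyAt x z i)
    (hyz : y ≠ z) : DiffersOnlyAt y z i := by
  have heq : ∀ k ≠ i, y k = z k := fun k hk => (hxy.apply_eq hk).symm.trans (hxz.apply_eq hk)
  refine fun k => ⟨fun hk => not_not.1 fun hki => hk (heq k hki), ?_⟩
  rintro rfl hk
  exact hyz (funext fun l => (eq_or_ne l k).elim (fun hl => hl ▸ hk) (heq l))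

theorem DiffersOnlyAt.update_left [DecidableEq ι] (hxy : DiffersOnlyAt x y l)
    (hyz : DiffersOnlyAt y z i) (hil : i ≠ l) :
    DiffersOnlyAt (Function.update x i (z i)) z l := by
  intro k
  rcases eq_or_ne k i with rfl | hk
  · simp [hil]
  · rw [Function.update_of_ne hk, ← hyz.apply_eq hk, hxy k]

theorem DiffersOnlyAt.eq_of_triangle (hxy : DiffersOnlyAt x y i) (hxz : DiffersOnlyAt x z j)
    (hyz : DiffersOnlyAt y z k) : i = j := by
  by_contra hij
  have hik : i = k := (hyz i).1 fun h => hxy.apply_ne ((hxz.apply_eq hij).trans h.symm)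
  have hjk : j = k := (hyz j).1 fun h => hxz.apply_ne ((hxy.apply_eq (Ne.symm hij)).trans h)
  exact hij (hik.trans hjk.symm)

theorem DiffersOnlyAt.eq_of_square (hxy : DiffersOnlyAt x y i) (hxz : DiffersOnlyAt x z j)
    (hij : i ≠ j) (hyw : DiffersOnlyAt y w k) (hzw : DiffersOnlyAt z w l) (hxw : x ≠ w) :
    k = j := by
  by_contra hkj
  have hxwj : x j = w j := (hxy.apply_eq hij.symm).trans (hyw.apply_eq (Ne.symm hkj))
  have hjl : j = l := (hzw j).1 fun h => hxz.apply_ne (hxwj.trans h.symm)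
  refine hxw (funext fun t => (eq_or_ne t j).elim (fun ht => ht ▸ hxwj) fun ht => ?_)
  exact (hxz.apply_eq ht).trans (hzw.apply_eq (hjl ▸ ht))

theorem dependsOn_of_forall_update [Finite ι] [DecidableEq ι] {γ : Type*} {f : (ι → β) → γ}
    {s : Set ι} (hf : ∀ x, ∀ i ∉ s, ∀ c, f (Function.update x i c) = f x) : DependsOn f s := by
  classical
  have := Fintype.ofFinite ι
  intro x y hxy
  have hpiecewise (t : Finset ι) : f (t.piecewise y x) = f x := by
    induction t using Finset.induction_on with
    | empty => simp
    | insert i t hi ih =>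
      rw [Finset.piecewise_insert]
      by_cases his : i ∈ s
      · rwa [Function.update_eq_self_iff.2 (by simp [hi, hxy i his])]
      · rw [hf _ i his, ih]
  simpa using (hpiecewise Finset.univ).symm

/-- The map `g` sends all edges of direction `i` at `x` to edges of direction `k` at `g x`. -/
def MapsDirection (g : (ι → β) → ι → β) (x : ι → β) (i k : ι) : Prop :=
  ∀ ⦃y⦄, DiffersOnlyAt x y i → DiffersOnlyAt (g x) (g y) k

section Automorphism

variable {g : Equiv.Perm (ι → β)}
  (hg : ∀ x y, (∃ i, DiffersOnlyAt (g x) (g y) i) ↔ ∃ i, DiffersOnlyAt x y i)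
include hg

theorem exists_mapsDirection [Nontrivial β] (x : ι → β) (i : ι) : ∃ k, MapsDirection g x i k := by
  classical
  obtain ⟨c, hc⟩ := exists_ne (x i)
  have hxc : DiffersOnlyAt x (Function.update x i c) i := differsOnlyAt_update hc.symm
  obtain ⟨k, hk⟩ := (hg _ _).2 ⟨i, hxc⟩
  refine ⟨k, fun y hy => ?_⟩
  rcases eq_or_ne (Function.update x i c) y with rfl | hne
  · exact hk
  · obtain ⟨l, hl⟩ := (hg _ _).2 ⟨i, hy⟩
    obtain ⟨_, hcy⟩ := (hg _ _).2 ⟨i, hxc.trans_of_ne hy hne⟩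
    rwa [hk.eq_of_triangle hl hcy]

theorem MapsDirection.injective [Nontrivial β] (hi : MapsDirection g x i k)
    (hj : MapsDirection g x j k) : i = j := by
  classical
  obtain ⟨c, hc⟩ := exists_ne (x i)
  obtain ⟨d, hd⟩ := exists_ne (x j)
  have hxc : DiffersOnlyAt x (Function.update x i c) i := differsOnlyAt_update hc.symm
  have hxd : DiffersOnlyAt x (Function.update x j d) j := differsOnlyAt_update hd.symm
  by_cases hcd : Function.update x i c = Function.update x j d
  · exact hxc.unique (hcd ▸ hxd)
  · obtain ⟨_, h⟩ := (hg _ _).1 ⟨k, (hi hxc).trans_of_ne (hj hxd) (g.injective.ne hcd)⟩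
    exact hxc.eq_of_triangle hxd h

/-- An edge of direction `i` at `y` and the edge `x y` of direction `l ≠ i` span a square without
diagonals, and `g` maps it to a square without diagonals, in which opposite edges are parallel. -/
theorem MapsDirection.of_differsOnlyAt [Nontrivial β] (hxy : DiffersOnlyAt x y l)
    (hi : MapsDirection g x i k) : MapsDirection g y i k := by
  classical
  intro z hyz
  rcases eq_or_ne i l with rfl | hil
  · rcases eq_or_ne x z with rfl | hxz
    · exact (hi hxy).symm
    · exact (hi hxy).trans_of_ne (hi (hxy.symm.trans_of_ne hyz hxz)) (g.injective.ne hyz.ne)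
  · have hxx' : DiffersOnlyAt x (Function.update x i (z i)) i :=
      differsOnlyAt_update (hxy.apply_eq hil ▸ hyz.apply_ne)
    have hx'z := hxy.update_left hyz hil
    obtain ⟨m, hm⟩ := exists_mapsDirection hg x l
    have hmk : m ≠ k := fun h => hil (hi.injective hg (h ▸ hm))
    obtain ⟨q, hq⟩ := (hg _ _).2 ⟨l, hx'z⟩
    obtain ⟨r, hr⟩ := (hg _ _).2 ⟨i, hyz⟩
    have hxz : x ≠ z := fun h => hil (hyz.unique (h ▸ hxy.symm))
    rwa [← (hm hxy).eq_of_square (hi hxx') hmk hr hq (g.injective.ne hxz)]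

theorem exists_perm_mapsDirection [Finite ι] [Nontrivial β] :
    ∃ π : Equiv.Perm ι, ∀ x i, MapsDirection g x i (π i) := by
  classical
  obtain ⟨x₀⟩ : Nonempty (ι → β) := inferInstance
  choose π hπ using exists_mapsDirection hg x₀
  have hinj : Function.Injective π := fun i j hij => (hπ i).injective hg (hij ▸ hπ j)
  refine ⟨Equiv.ofBijective π (Finite.injective_iff_bijective.1 hinj), fun x i => ?_⟩
  have hconst : DependsOn (fun x => MapsDirection g x i (π i)) ∅ := by
    refine dependsOn_of_forall_update fun x l _ c => propext ?_
    rcases eq_or_ne (x l) c with rfl | hc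
    · rw [Function.update_eq_self]
    · have hxc := differsOnlyAt_update hc
      exact ⟨.of_differsOnlyAt hg hxc.symm, .of_differsOnlyAt hg hxc⟩
  exact (hconst.empty x₀ x).mp (hπ i)

theorem exists_wreath_of_differsOnlyAt_iff [Finite ι] [Nontrivial β] :
    ∃ (σ : ι → Equiv.Perm β) (π : Equiv.Perm ι), ∀ x k, g x k = σ k (x (π⁻¹ k)) := by
  classical
  obtain ⟨π, hπ⟩ := exists_perm_mapsDirection hg
  have hdep (k : ι) : DependsOn (fun x => g x k) {π⁻¹ k} := by
    refine dependsOn_of_forall_update fun x l hl c => ?_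
    rcases eq_or_ne (x l) c with rfl | hc
    · rw [Function.update_eq_self]
    · refine ((hπ x l (differsOnlyAt_update hc)).apply_eq fun hk => hl ?_).symm
      simp [hk]
  obtain ⟨x₀⟩ : Nonempty (ι → β) := inferInstance
  let σ (k : ι) (c : β) : β := g (Function.update x₀ (π⁻¹ k) c) k
  have hσ (x : ι → β) (k : ι) : g x k = σ k (x (π⁻¹ k)) := hdep k (by simp)
  have hbij (k : ι) : Function.Bijective (σ k) := by
    refine ⟨fun c d hcd => ?_, fun b => ?_⟩
    · by_contra hne
      have hline := hπ _ _ (differsOnlyAt_update_update (x := x₀) (i := π⁻¹ k) hne)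
      exact hline.apply_ne (by simpa [σ] using hcd)
    · exact ⟨g.symm (Function.update x₀ k b) (π⁻¹ k), (hσ _ k).symm.trans (by simp)⟩
  exact ⟨fun k => Equiv.ofBijective _ (hbij k), π, hσ⟩

end Automorphism

theorem hammingDist_comp_equiv {ι' : Type*} [Fintype ι] [Fintype ι'] [DecidableEq β] (e : ι' ≃ ι)
    (x y : ι → β) : hammingDist (x ∘ e) (y ∘ e) = hammingDist x y := by
  simp only [hammingDist, Finset.card_filter, Function.comp_apply]
  exact e.sum_comp fun i => if x i ≠ y i then 1 else 0

end HammingGraph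

section LineSeparation

variable {κ : Type*} [DecidableEq κ]

/-- The number of points separating `x` from `y` on a line in a direction `i` with `x i ≠ y i`,
where `a` and `b` are the distances of `x` and `y` to that line, measured away from coordinate `i`,
and `q` is the number of points of the line. -/
def lineSeparationCount (f : ℕ → κ) (q a b : ℕ) : ℕ :=
  (if f a ≠ f (b + 1) then 1 else 0) + (if f (a + 1) ≠ f b then 1 else 0)
    + (q - 2) * if f (a + 1) ≠ f (b + 1) then 1 else 0

theorem lineSeparationCount_add_le (f : ℕ → κ) {q : ℕ} (hq : 4 ≤ q) (a b : ℕ) :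
    lineSeparationCount f q a a + lineSeparationCount f q b b
      ≤ 2 * lineSeparationCount f q a b := by
  grind [lineSeparationCount]

theorem lineSeparationCount_add_lt {f : ℕ → κ} {q : ℕ} (hq : 5 ≤ q) {a b : ℕ}
    (hab : f (a + 1) ≠ f (b + 1)) :
    lineSeparationCount f q a a + lineSeparationCount f q b b
      < 2 * lineSeparationCount f q a b := by
  simp only [lineSeparationCount, if_pos hab]
  grind

end LineSeparation

section DeleteCoord

variable {ι β : Type*} {x y : ι → β} {i : ι}

/-- The projection of `x` along direction `i`: all its coordinates except the `i`-th one. -/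
def deleteCoord (i : ι) (x : ι → β) : {j // j ≠ i} → β :=
  fun j => x j

theorem DiffersOnlyAt.deleteCoord_eq (h : DiffersOnlyAt x y i) :
    deleteCoord i x = deleteCoord i y :=
  funext fun j => h.apply_eq j.2

theorem deleteCoord_update [DecidableEq ι] (i : ι) (x : ι → β) (c : β) :
    deleteCoord i (Function.update x i c) = deleteCoord i x :=
  funext fun j => by simp [deleteCoord, j.2]

theorem update_eq_of_deleteCoord_eq [DecidableEq ι] (h : deleteCoord i x = deleteCoord i y) :
    Function.update x i (y i) = y :=
  funext fun j => by
    rcases eq_or_ne j i with rfl | hj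
    · simp
    · exact (Function.update_of_ne hj _ _).trans (congrFun h ⟨j, hj⟩)

end DeleteCoord

theorem apply_eq_of_forall_exists_gt {κ : Type*} {h : ℕ → κ} {N : ℕ}
    (hh : ∀ a < N, ∃ b, a < b ∧ b ≤ N ∧ h a = h b) {a : ℕ} (ha : a ≤ N) : h a = h N := by
  rcases ha.eq_or_lt with rfl | ha
  · rfl
  · obtain ⟨b, hab, hb, heq⟩ := hh a ha
    have : N - b < N - a := Nat.sub_lt_sub_left ha hab
    exact heq.trans (apply_eq_of_forall_exists_gt hh hb)
termination_by N - a

section HammingDist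

variable {ι β : Type*} [Fintype ι] [DecidableEq β]

theorem hammingDist_piSplitAt_symm [DecidableEq ι] (i : ι) (x : ι → β) (c : β)
    (w : {j // j ≠ i} → β) :
    hammingDist x ((Equiv.piSplitAt i fun _ => β).symm (c, w))
      = hammingDist (deleteCoord i x) w + if x i = c then 0 else 1 := by
  simp only [hammingDist, Finset.card_filter, Fintype.sum_eq_add_sum_subtype_ne _ i]
  rw [add_comm]
  unfold deleteCoord
  congr 1
  · exact Finset.sum_congr rfl fun j _ => by simp [j.2]
  · simp [ite_not]

theorem sum_comp_hammingDist [DecidableEq ι] [Fintype β] {ι' M : Type*} [Fintype ι']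
    [DecidableEq ι'] [AddCommMonoid M]
    (e : ι ≃ ι') (F : ℕ → M) (x : ι → β) (y : ι' → β) :
    ∑ w, F (hammingDist x w) = ∑ w, F (hammingDist y w) := by
  let τ (k : ι') : Equiv.Perm β := Equiv.swap (x (e.symm k)) (y k)
  let φ : (ι → β) ≃ (ι' → β) := (e.arrowCongr (Equiv.refl β)).trans (Equiv.piCongrRight τ)
  have hφx : φ x = y := funext fun k => Equiv.swap_apply_left _ _
  have hφ (w : ι → β) : hammingDist (φ x) (φ w) = hammingDist x w :=
    (hammingDist_comp (fun k => τ k) fun k => (τ k).injective).trans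
      (hammingDist_comp_equiv e.symm x w)
  rw [← φ.sum_comp, ← hφx]
  simp only [hφ]

theorem exists_hammingDist_eq_and_lt [Fintype β] (hβ : 3 ≤ Fintype.card β) {x y : ι → β}
    (hxy : x ≠ y) {k : ℕ} (hk : k < Fintype.card ι) :
    ∃ w, hammingDist x w = k ∧ k < hammingDist y w := by
  classical
  obtain ⟨i, hi⟩ := Function.ne_iff.1 hxy
  obtain ⟨S, hSi, rfl⟩ : ∃ S ⊆ Finset.univ.erase i, S.card = k :=
    Finset.exists_subset_card_eq <| by
      rw [Finset.card_erase_of_mem (Finset.mem_univ i), Finset.card_univ]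
      exact Nat.le_sub_one_of_lt hk
  have hiS : i ∉ S := fun h => Finset.notMem_erase i _ (hSi h)
  have hthird (l : ι) : ∃ c, c ∉ ({x l, y l} : Finset β) := by
    obtain ⟨c, -, hc⟩ := Finset.exists_mem_notMem_of_card_lt_card
      (s := {x l, y l}) (t := Finset.univ) (Finset.card_le_two.trans_lt hβ)
    exact ⟨c, hc⟩
  choose c hc using hthird
  have hcx : ∀ l, x l ≠ c l := fun l h => hc l (by simp [h])
  have hcy : ∀ l, y l ≠ c l := fun l h => hc l (by simp [h])
  refine ⟨S.piecewise c x, ?_, Finset.card_lt_card (Finset.ssubset_iff.2 ⟨i, hiS, ?_⟩)⟩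
  · refine congrArg Finset.card (Finset.ext fun l => ?_)
    by_cases hl : l ∈ S <;> simp [hl, hcx]
  · intro l hl
    rcases Finset.mem_insert.1 hl with rfl | hl
    · simpa [hiS] using hi.symm
    · simpa [hl] using hcy l

theorem exists_apply_hammingDist_ne [Fintype β] (hβ : 3 ≤ Fintype.card β) {κ : Type*} {h : ℕ → κ}
    (hh : ∃ a ≤ Fintype.card ι, h a ≠ h (Fintype.card ι)) {x y : ι → β} (hxy : x ≠ y) :
    ∃ w, h (hammingDist x w) ≠ h (hammingDist y w) := by
  obtain ⟨a, ha, hne⟩ := hh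
  by_contra! heq
  refine hne (apply_eq_of_forall_exists_gt (fun k hk => ?_) ha)
  obtain ⟨w, rfl, hlt⟩ := exists_hammingDist_eq_and_lt hβ hxy hk
  exact ⟨_, hlt, hammingDist_le_card_fintype, heq w⟩

end HammingDist

section Separation

variable {ι β κ : Type*} [Fintype ι] [Fintype β] [DecidableEq ι] [DecidableEq β]
  [DecidableEq κ]

/-- The number of points `z` at which the colouring `f` of Hamming distances separates `x` from
`y`. -/
def separationCount (f : ℕ → κ) (x y : ι → β) : ℕ :=
  ∑ z : ι → β, if f (hammingDist x z) ≠ f (hammingDist y z) then 1 else 0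

theorem separationCount_map {f : ℕ → κ} {g : Equiv.Perm (ι → β)}
    (hg : ∀ x y, f (hammingDist (g x) (g y)) = f (hammingDist x y)) (x y : ι → β) :
    separationCount f (g x) (g y) = separationCount f x y := by
  unfold separationCount
  rw [← Equiv.sum_comp g]
  simp only [hg]

theorem separationCount_eq_sum_lineSeparationCount (f : ℕ → κ) {x y : ι → β} {i : ι}
    (hi : x i ≠ y i) :
    separationCount f x y = ∑ w : {j // j ≠ i} → β, lineSeparationCount f (Fintype.card β)
      (hammingDist (deleteCoord i x) w)
      (hammingDist (deleteCoord i y) w) := by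
  rw [separationCount, ← (Equiv.piSplitAt i fun _ => β).symm.sum_comp, Fintype.sum_prod_type_right]
  refine Finset.sum_congr rfl fun w _ => ?_
  simp only [hammingDist_piSplitAt_symm]
  rw [← Finset.sum_add_sum_compl {x i, y i}, Finset.sum_pair hi]
  simp only [lineSeparationCount, if_true, if_neg hi, if_neg hi.symm, add_zero]
  congr 1
  have hcompl : ∀ c ∈ ({x i, y i} : Finset β)ᶜ, x i ≠ c ∧ y i ≠ c := by
    simp [eq_comm]
  rw [Finset.sum_congr rfl fun c hc => by rw [if_neg (hcompl c hc).1, if_neg (hcompl c hc).2]]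
  rw [Finset.sum_const, Finset.card_compl, Finset.card_pair hi, smul_eq_mul]

theorem separationCount_eq_of_differsOnlyAt (f : ℕ → κ) {x y x' y' : ι → β} {i i' : ι}
    (h : DiffersOnlyAt x y i) (h' : DiffersOnlyAt x' y' i') :
    separationCount f x y = separationCount f x' y' := by
  rw [separationCount_eq_sum_lineSeparationCount f h.apply_ne,
    separationCount_eq_sum_lineSeparationCount f h'.apply_ne, h.deleteCoord_eq, h'.deleteCoord_eq]
  have e : {j // j ≠ i} ≃ {j // j ≠ i'} := Fintype.equivOfCardEq (by simp)
  exact sum_comp_hammingDist e (fun a => lineSeparationCount f (Fintype.card β) a a) _ _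

theorem separationCount_update_lt (hβ : 5 ≤ Fintype.card β) {f : ℕ → κ}
    (hf : ∃ d ∈ Set.Icc 1 (Fintype.card ι), f d ≠ f (Fintype.card ι)) {x y : ι → β} {i : ι}
    (hi : x i ≠ y i) (hne : Function.update x i (y i) ≠ y) :
    separationCount f x (Function.update x i (y i)) < separationCount f x y := by
  have hswap : separationCount f x (Function.update x i (y i))
      = separationCount f y (Function.update y i (x i)) :=
    separationCount_eq_of_differsOnlyAt f (differsOnlyAt_update hi) (differsOnlyAt_update hi.symm)
  suffices separationCount f x (Function.update x i (y i))
      + separationCount f y (Function.update y i (x i)) < 2 * separationCount f x y by lia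
  obtain ⟨d, ⟨hd, hdι⟩, hfd⟩ := hf
  have hcard : Fintype.card {j // j ≠ i} + 1 = Fintype.card ι := by
    rw [Fintype.card_subtype_compl, Fintype.card_subtype_eq]
    exact Nat.sub_add_cancel (hd.trans hdι)
  obtain ⟨w, hw⟩ : ∃ w, f (hammingDist (deleteCoord i x) w + 1)
      ≠ f (hammingDist (deleteCoord i y) w + 1) :=
    exists_apply_hammingDist_ne (h := fun a => f (a + 1)) (by lia)
      ⟨d - 1, by lia, by rwa [Nat.sub_add_cancel hd, hcard]⟩
      (mt update_eq_of_deleteCoord_eq hne)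
  rw [separationCount_eq_sum_lineSeparationCount f (i := i) (by simpa using hi),
    separationCount_eq_sum_lineSeparationCount f (i := i) (x := y) (by simpa using hi.symm),
    separationCount_eq_sum_lineSeparationCount f hi, deleteCoord_update, deleteCoord_update,
    ← Finset.sum_add_distrib, Finset.mul_sum]
  exact Finset.sum_lt_sum (fun w _ => lineSeparationCount_add_le f (by lia) _ _)
    ⟨w, Finset.mem_univ w, lineSeparationCount_add_lt hβ hw⟩

theorem exists_differsOnlyAt_of_separationCount_eq (hβ : 5 ≤ Fintype.card β) {f : ℕ → κ}
    (hf : ∃ d ∈ Set.Icc 1 (Fintype.card ι), f d ≠ f (Fintype.card ι)) {x y u v : ι → β} {j : ι}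
    (huv : DiffersOnlyAt u v j) (hxy : x ≠ y) (h : separationCount f x y = separationCount f u v) :
    ∃ i, DiffersOnlyAt x y i := by
  obtain ⟨i, hi⟩ := Function.ne_iff.1 hxy
  have hadj := differsOnlyAt_update hi
  by_cases hupd : Function.update x i (y i) = y
  · exact ⟨i, hupd ▸ hadj⟩
  · have hlt := separationCount_update_lt hβ hf hi hupd
    rw [separationCount_eq_of_differsOnlyAt f hadj huv, h] at hlt
    exact absurd hlt (lt_irrefl _)

end Separation

theorem exists_wreath_of_apply_hammingDist_eq {ι β κ : Type*} [Fintype ι] [Fintype β]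
    [DecidableEq β] (hβ : 5 ≤ Fintype.card β) {f : ℕ → κ}
    (hf : ∃ d ∈ Set.Icc 1 (Fintype.card ι), f d ≠ f (Fintype.card ι)) {g : Equiv.Perm (ι → β)}
    (hg : ∀ x y, f (hammingDist (g x) (g y)) = f (hammingDist x y)) :
    ∃ (σ : ι → Equiv.Perm β) (π : Equiv.Perm ι), ∀ x k, g x k = σ k (x (π⁻¹ k)) := by
  classical
  have : Nontrivial β := Fintype.one_lt_card_iff_nontrivial.1 (by lia)
  refine exists_wreath_of_differsOnlyAt_iff fun x y => ⟨?_, ?_⟩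
  · rintro ⟨k, hk⟩
    exact exists_differsOnlyAt_of_separationCount_eq hβ hf hk (fun h => hk.ne (congrArg g h))
      (separationCount_map hg x y).symm
  · rintro ⟨i, hi⟩
    exact exists_differsOnlyAt_of_separationCount_eq hβ hf hi (g.injective.ne hi.ne)
      (separationCount_map hg x y)

section FixedCode

variable {I R : Type*} [Fintype I]

theorem mul_eq_left_of_forall_mulVec_eq [CommSemiring R] {M N : Matrix I I R} (hM : M.IsSymm)
    (hMM : M * M = M) (hN : N.IsSymm) (h : ∀ a, M *ᵥ a = a → N *ᵥ a = a) : M * N = M := by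
  refine funext fun i => ?_
  have hrow : M *ᵥ M i = M i := by
    rw [← vecMul_transpose, hM, ← mul_apply_eq_vecMul, hMM]
  rw [mul_apply_eq_vecMul, ← hN, vecMul_transpose, h _ hrow]

theorem eq_of_forall_mulVec_eq_iff [CommSemiring R] {M N : Matrix I I R} (hM : M.IsSymm)
    (hMM : M * M = M) (hN : N.IsSymm) (hNN : N * N = N) (h : ∀ a, M *ᵥ a = a ↔ N *ᵥ a = a) :
    M = N := by
  have hMN : M * N = M := mul_eq_left_of_forall_mulVec_eq hM hMM hN fun a => (h a).1
  have hNM : N * M = N := mul_eq_left_of_forall_mulVec_eq hN hNN hM fun a => (h a).2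
  calc M = M * N := hMN.symm
    _ = (N * M)ᵀ := by rw [transpose_mul, hM, hN]
    _ = N := by rw [hNM, hN]

theorem mem_codeAut_iff_s1 {I : Type} {C : Set (I → ZMod 2)} {g : Equiv.Perm I} :
    g ∈ codeAut C ↔ ∀ a, a ∘ g ∈ C ↔ a ∈ C := by
  have himage := (g.arrowCongr (Equiv.refl (ZMod 2))).image_eq_preimage_symm C
  exact (Iff.of_eq (congrArg (· = C) himage)).trans Set.ext_iff

theorem mem_codeAut_setOf_mulVec_eq_iff {I : Type} [Fintype I] {M : Matrix I I (ZMod 2)}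
    (hM : M.IsSymm) (hMM : M * M = M) {g : Equiv.Perm I} :
    g ∈ codeAut {a | M *ᵥ a = a} ↔ ∀ x y, M (g x) (g y) = M x y := by
  have hcomp (a : I → ZMod 2) : M.submatrix g g *ᵥ (a ∘ g) = (M *ᵥ a) ∘ g := by
    simp [submatrix_mulVec_equiv, Function.comp_assoc]
  have hinj := g.surjective.injective_comp_right (γ := ZMod 2)
  rw [mem_codeAut_iff_s1]
  constructor
  · intro hg
    have hsub : M.submatrix g g = M := by
      refine eq_of_forall_mulVec_eq_iff (hM.submatrix g) (by rw [submatrix_mul_equiv, hMM]) hM hMM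
        fun b => ?_
      obtain ⟨a, rfl⟩ : ∃ a, a ∘ g = b := ⟨b ∘ g.symm, by simp [Function.comp_assoc]⟩
      rw [hcomp, hinj.eq_iff]
      exact (hg a).symm
    exact fun x y => congrFun (congrFun hsub x) y
  · intro hg a
    have hsub : M.submatrix g g = M := Matrix.ext hg
    rw [Set.mem_ofPred_eq, ← hsub, hcomp, hinj.eq_iff, hsub, Set.mem_ofPred_eq]

end FixedCode

section BinomTransform

variable {R S : Type*}

/-- The binomial transform of `ω`, with the signs omitted because it is used in characteristic
two. -/
def binomTransform [AddCommMonoid R] (ω : ℕ → R) (d : ℕ) : R :=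
  ∑ w ∈ Finset.range (d + 1), d.choose w • ω w

theorem map_binomTransform [AddCommMonoid R] [AddCommMonoid S] (φ : R →+ S) (ω : ℕ → R) (d : ℕ) :
    φ (binomTransform ω d) = binomTransform (φ ∘ ω) d := by
  simp [binomTransform]

theorem binomTransform_const [Semiring R] (c : R) (d : ℕ) :
    binomTransform (fun _ => c) d = 2 ^ d * c := by
  rw [binomTransform, ← Finset.sum_smul, Nat.sum_range_choose, nsmul_eq_mul, Nat.cast_pow,
    Nat.cast_ofNat]

variable [Ring R] [CharP R 2]

theorem binomTransform_eq_fwdDiff_iter (ω : ℕ → R) (d : ℕ) :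
    binomTransform ω d = (fwdDiff 1)^[d] ω 0 := by
  simp [binomTransform, fwdDiff_iter_eq_sum_shift, CharTwo.neg_eq]

theorem binomTransform_binomTransform (ω : ℕ → R) : binomTransform (binomTransform ω) = ω := by
  funext d
  rw [binomTransform]
  simpa only [zero_add, smul_eq_mul, mul_one, ← binomTransform_eq_fwdDiff_iter]
    using (shift_eq_sum_fwdDiff_iter 1 ω d 0).symm

theorem binomTransform_eq_of_forall_eq {ω : ℕ → R} {m d : ℕ} (hd : d ∈ Set.Icc 1 m) {c : R}
    (hω : ∀ w ∈ Set.Icc 1 m, ω w = c) : binomTransform ω d = ω 0 + c := by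
  obtain ⟨hd1, hdm⟩ := hd
  have hconst : binomTransform (fun _ => c) d = 0 := by
    rw [binomTransform_const, CharTwo.two_eq_zero, zero_pow (by lia), zero_mul]
  have hsum : ∑ w ∈ Finset.range d, d.choose (w + 1) • ω (w + 1) = c := by
    rw [binomTransform, Finset.sum_range_succ', Nat.choose_zero_right, one_smul,
      CharTwo.add_eq_zero] at hconst
    refine (Finset.sum_congr rfl fun w hw => ?_).trans hconst
    rw [hω (w + 1) ⟨by lia, (Finset.mem_range.1 hw).trans_le hdm⟩]
  rw [binomTransform, Finset.sum_range_succ', Nat.choose_zero_right, one_smul, hsum, add_comm]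

theorem castHom_comp_binomTransform (ω : ℕ → ZMod 2) :
    ZMod.castHom (dvd_refl 2) R ∘ binomTransform ω
      = binomTransform (ZMod.castHom (dvd_refl 2) R ∘ ω) :=
  funext fun d => map_binomTransform (ZMod.castHom (dvd_refl 2) R).toAddMonoidHom ω d

theorem forall_binomTransform_eq_iff {ω : ℕ → R} {m : ℕ} :
    (∀ d ∈ Set.Icc 1 m, binomTransform ω d = binomTransform ω m)
      ↔ ∀ w ∈ Set.Icc 1 m, ω w = ω m := by
  have key {ω : ℕ → R} (hω : ∀ w ∈ Set.Icc 1 m, ω w = ω m) :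
      ∀ d ∈ Set.Icc 1 m, binomTransform ω d = binomTransform ω m := fun d hd => by
    rw [binomTransform_eq_of_forall_eq hd hω,
      binomTransform_eq_of_forall_eq ⟨hd.1.trans hd.2, le_rfl⟩ hω]
  refine ⟨fun h => ?_, key⟩
  simpa only [binomTransform_binomTransform] using key h

end BinomTransform

section DistanceMatrix

variable {ι β R S : Type*} [Fintype ι] [DecidableEq β]

/-- The matrix indexed by `ι → β` whose `(x, y)` entry is `f` of the Hamming distance of `x` and
`y`. -/
def distanceMatrix (f : ℕ → R) : Matrix (ι → β) (ι → β) R :=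
  of fun x y => f (hammingDist x y)

theorem isSymm_distanceMatrix (f : ℕ → R) : (distanceMatrix f : Matrix (ι → β) _ R).IsSymm :=
  Matrix.ext fun x y => congrArg f (hammingDist_comm y x)

theorem map_distanceMatrix (φ : R → S) (f : ℕ → R) :
    (distanceMatrix f : Matrix (ι → β) _ R).map φ = distanceMatrix (φ ∘ f) :=
  rfl

end DistanceMatrix

section FourierTransform

/-- The matrix of the discrete Fourier transform on `ι → R` attached to the additive character `χ`,
with rows indexed by the frequencies. -/
def dftMatrix {ι R K : Type*} [Fintype ι] [CommRing R] [CommRing K] (χ : AddChar R K) :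
    Matrix (ι → R) (ι → R) K :=
  of fun j x => χ (x ⬝ᵥ j)

theorem addChar_dotProduct {ι R K : Type*} [Fintype ι] [CommRing R] [CommRing K]
    (χ : AddChar R K) (x y : ι → R) : χ (x ⬝ᵥ y) = ∏ k, χ (x k * y k) :=
  map_sum χ.toAddMonoidHom _ _

variable {ι R K : Type*} [Fintype ι] [DecidableEq ι] [CommRing R] [Fintype R] [DecidableEq R]
  [CommRing K] [IsDomain K] [CharP K 2] {χ : AddChar R K}

theorem sum_compl_zero_addChar_mul (hχ : χ.IsPrimitive) (hR : (Fintype.card R : K) = 1) (b : R) :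
    ∑ c ∈ {0}ᶜ, χ (b * c) = if b ≠ 0 then 1 else 0 := by
  have hsum := Fintype.sum_eq_add_sum_compl 0 fun c => χ (c * b)
  rw [AddChar.sum_mulShift b hχ, zero_mul, AddChar.map_zero_eq_one] at hsum
  simp_rw [mul_comm b]
  rw [CharTwo.eq_add_iff_add_eq] at hsum
  split_ifs at hsum ⊢ <;> simp_all

theorem sum_addChar_dotProduct_of_support_eq (hχ : χ.IsPrimitive)
    (hR : (Fintype.card R : K) = 1) (t : ι → R) (S : Finset ι) :
    ∑ j : ι → R with ({k | j k ≠ 0} : Finset ι) = S, χ (t ⬝ᵥ j)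
      = if S ⊆ ({k | t k ≠ 0} : Finset ι) then 1 else 0 := by
  have hpi : ({j : ι → R | ({k | j k ≠ 0} : Finset ι) = S} : Finset (ι → R))
      = Fintype.piFinset fun k => if k ∈ S then {0}ᶜ else {0} := by
    ext j
    simp only [Finset.ext_iff, Finset.mem_filter_univ, Fintype.mem_piFinset]
    refine forall_congr' fun k => ?_
    by_cases hk : k ∈ S <;> simp [hk]
  have hfactor (k : ι) : ∑ c ∈ (if k ∈ S then {0}ᶜ else {0} : Finset R), χ (t k * c)
      = if k ∈ S → t k ≠ 0 then 1 else 0 := by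
    by_cases hk : k ∈ S
    · simp only [hk, if_true, forall_const, sum_compl_zero_addChar_mul hχ hR]
    · simp [hk]
  simp only [hpi, addChar_dotProduct]
  rw [← Finset.prod_univ_sum (fun k => if k ∈ S then {0}ᶜ else {0}) fun k c => χ (t k * c)]
  simp only [hfactor, Finset.prod_ite_zero, Finset.prod_const_one, Finset.mem_univ, forall_const,
    Finset.subset_iff, Finset.mem_filter_univ]

theorem sum_apply_hammingNorm_mul_addChar (hχ : χ.IsPrimitive) (hR : (Fintype.card R : K) = 1)
    (ω : ℕ → K) (t : ι → R) :
    ∑ j, ω (hammingNorm j) * χ (t ⬝ᵥ j) = binomTransform ω (hammingNorm t) := by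
  rw [← Finset.sum_fiberwise _ fun j : ι → R => ({k | j k ≠ 0} : Finset ι)]
  have hfiber (S : Finset ι) :
      ∑ j : ι → R with ({k | j k ≠ 0} : Finset ι) = S, ω (hammingNorm j) * χ (t ⬝ᵥ j)
        = if S ⊆ ({k | t k ≠ 0} : Finset ι) then ω S.card else 0 := by
    rw [← mul_boole, ← sum_addChar_dotProduct_of_support_eq hχ hR, Finset.mul_sum]
    refine Finset.sum_congr rfl fun j hj => ?_
    rw [← (Finset.mem_filter.1 hj).2, hammingNorm]
  simp only [hfiber, ← Finset.mem_powerset]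
  rw [Finset.sum_ite_mem, Finset.univ_inter]
  exact Finset.sum_powerset_apply_card _

theorem dftMatrix_inv_mul_diagonal_mul (hχ : χ.IsPrimitive) (hR : (Fintype.card R : K) = 1)
    (ω : ℕ → K) :
    dftMatrix χ⁻¹ * diagonal (fun j : ι → R => ω (hammingNorm j)) * dftMatrix χ
      = distanceMatrix (binomTransform ω) := by
  ext x y
  rw [mul_apply, distanceMatrix, of_apply, hammingDist_eq_hammingNorm, neg_add_eq_sub,
    ← sum_apply_hammingNorm_mul_addChar hχ hR]
  refine Finset.sum_congr rfl fun j _ => ?_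
  rw [mul_diagonal, dftMatrix, dftMatrix, of_apply, of_apply, AddChar.inv_apply, mul_right_comm,
    ← AddChar.map_add_eq_mul, mul_comm, sub_dotProduct, dotProduct_comm x j, neg_add_eq_sub]

theorem dftMatrix_inv_mul (hχ : χ.IsPrimitive) (hR : (Fintype.card R : K) = 1) :
    dftMatrix χ⁻¹ * dftMatrix χ = (1 : Matrix (ι → R) (ι → R) K) := by
  have h := dftMatrix_inv_mul_diagonal_mul (ι := ι) hχ hR fun _ => 1
  rw [diagonal_one, mul_one] at h
  ext x y
  simp only [h, distanceMatrix, of_apply, binomTransform_const, CharTwo.two_eq_zero, mul_one,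
    one_apply, zero_pow_eq, hammingDist_eq_zero]

theorem dftMatrix_mul_distanceMatrix (hχ : χ.IsPrimitive) (hR : (Fintype.card R : K) = 1)
    (ω : ℕ → K) :
    dftMatrix χ * distanceMatrix (binomTransform ω)
      = diagonal (fun j : ι → R => ω (hammingNorm j)) * dftMatrix χ := by
  have hinv : dftMatrix χ * dftMatrix χ⁻¹ = (1 : Matrix (ι → R) (ι → R) K) :=
    mul_eq_one_comm.1 (dftMatrix_inv_mul hχ hR)
  rw [← dftMatrix_inv_mul_diagonal_mul hχ hR, ← mul_assoc, ← mul_assoc, hinv, one_mul]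

theorem distanceMatrix_binomTransform_mul_self (hχ : χ.IsPrimitive)
    (hR : (Fintype.card R : K) = 1) {ω : ℕ → K} (hω : ∀ w, ω w * ω w = ω w) :
    distanceMatrix (binomTransform ω) * distanceMatrix (binomTransform ω)
      = (distanceMatrix (binomTransform ω) : Matrix (ι → R) (ι → R) K) := by
  nth_rw 1 [← dftMatrix_inv_mul_diagonal_mul hχ hR]
  rw [mul_assoc, dftMatrix_mul_distanceMatrix hχ hR, ← mul_assoc, mul_assoc (dftMatrix χ⁻¹),
    diagonal_mul_diagonal]
  simp only [hω, dftMatrix_inv_mul_diagonal_mul hχ hR]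

theorem zmodTwo_distanceMatrix_binomTransform_mul_self (hχ : χ.IsPrimitive)
    (hR : (Fintype.card R : K) = 1) (ω : ℕ → ZMod 2) :
    distanceMatrix (binomTransform ω) * distanceMatrix (binomTransform ω)
      = (distanceMatrix (binomTransform ω) : Matrix (ι → R) _ _) := by
  let φ := ZMod.castHom (dvd_refl 2) K
  have hω (w : ℕ) : (φ ∘ ω) w * (φ ∘ ω) w = (φ ∘ ω) w := by
    rw [Function.comp_apply, ← map_mul]
    exact congrArg φ ((by decide : ∀ c : ZMod 2, c * c = c) (ω w))
  apply map_injective φ.injective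
  simp only [Matrix.map_mul]
  rw [map_distanceMatrix, castHom_comp_binomTransform]
  exact distanceMatrix_binomTransform_mul_self hχ hR hω

theorem distanceMatrix_binomTransform_mulVec_eq_iff (hχ : χ.IsPrimitive)
    (hR : (Fintype.card R : K) = 1) (ω : ℕ → K) (v : (ι → R) → K) :
    distanceMatrix (binomTransform ω) *ᵥ v = v
      ↔ ∀ j, ω (hammingNorm j) * (dftMatrix χ *ᵥ v) j = (dftMatrix χ *ᵥ v) j := by
  have hinj : Function.Injective (dftMatrix χ : Matrix (ι → R) _ K).mulVec :=
    mulVec_injective_of_isUnit (.of_mul_eq_one_right _ (dftMatrix_inv_mul hχ hR))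
  rw [← hinj.eq_iff, mulVec_mulVec, dftMatrix_mul_distanceMatrix hχ hR, ← mulVec_mulVec,
    funext_iff]
  simp only [mulVec_diagonal]

end FourierTransform

section AbelianCode

theorem natCast_card_zmod_eq_one {n : ℕ} [NeZero n] {R : Type*} [Ring R] [CharP R 2]
    (hodd : Odd n) : (Fintype.card (ZMod n) : R) = 1 := by
  rw [ZMod.card, natCast_eq_one_of_odd_of_two_eq_zero hodd CharTwo.two_eq_zero]

variable {n m : ℕ} [NeZero n] {W : Set ℕ} {K : Type} [Field K] [CharP K 2] {α : K}

theorem mem_abelianCode_iff (hodd : Odd n) (hα : IsPrimitiveRoot α n)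
    {a : (Fin m → ZMod n) → ZMod 2} :
    a ∈ abelianCode n m W K α ↔ distanceMatrix (binomTransform (W.indicator 1)) *ᵥ a = a := by
  let φ := ZMod.castHom (dvd_refl 2) K
  let χ := AddChar.zmodChar n hα.pow_eq_one
  have hφ (c : ZMod 2) : φ c = if c = 1 then 1 else 0 := by
    obtain rfl | rfl : c = 0 ∨ c = 1 := by decide +revert
    · simp
    · simp
  have hdft (j : Fin m → ZMod n) : (dftMatrix χ *ᵥ (φ ∘ a)) j
      = ∑ i, (if a i = 1 then (1 : K) else 0) * α ^ (∑ k, i k * j k).val :=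
    Finset.sum_congr rfl fun i _ => by
      rw [← hφ, mul_comm]
      exact congrArg (φ (a i) * ·) (AddChar.zmodChar_apply hα.pow_eq_one _)
  have hmap : φ ∘ (distanceMatrix (binomTransform (W.indicator 1)) *ᵥ a)
      = distanceMatrix (binomTransform (φ ∘ W.indicator 1)) *ᵥ (φ ∘ a) := by
    rw [← castHom_comp_binomTransform, ← map_distanceMatrix]
    exact funext fun x => φ.map_mulVec _ _ x
  rw [← φ.injective.comp_left.eq_iff, hmap, distanceMatrix_binomTransform_mulVec_eq_iff
    (AddChar.zmodChar_primitive_of_primitive_root n hα) (natCast_card_zmod_eq_one hodd)]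
  refine forall_congr' fun j => ?_
  rw [← hdft]
  by_cases hj : hammingNorm j ∈ W <;> simp [hj, χ, eq_comm]

theorem mem_codeAut_abelianCode_iff (hodd : Odd n) (hα : IsPrimitiveRoot α n)
    {g : Equiv.Perm (Fin m → ZMod n)} :
    g ∈ codeAut (abelianCode n m W K α)
      ↔ ∀ x y, binomTransform (W.indicator (1 : ℕ → ZMod 2)) (hammingDist (g x) (g y))
          = binomTransform (W.indicator 1) (hammingDist x y) := by
  have hcode : abelianCode n m W K α
      = {a | distanceMatrix (binomTransform (W.indicator 1)) *ᵥ a = a} :=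
    Set.ext fun _ => mem_abelianCode_iff hodd hα
  rw [hcode]
  exact mem_codeAut_setOf_mulVec_eq_iff (isSymm_distanceMatrix _)
    (zmodTwo_distanceMatrix_binomTransform_mul_self
      (AddChar.zmodChar_primitive_of_primitive_root n hα) (natCast_card_zmod_eq_one hodd) _)

theorem boundaryW_iff (hW : W ⊆ Set.Iic m) :
    BoundaryW m W ↔ ∀ w ∈ Set.Icc 1 m, (w ∈ W ↔ m ∈ W) := by
  constructor
  · rintro (rfl | rfl | rfl | rfl) <;> grind
  · intro h
    by_cases h0 : 0 ∈ W <;> by_cases hm : m ∈ W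
    · exact .inr (.inr (.inr (by ext w; grind)))
    · exact .inr (.inl (by ext w; grind))
    · exact .inr (.inr (.inl (by ext w; grind)))
    · exact .inl (by ext w; grind)

theorem boundaryW_iff_forall_binomTransform_eq (hW : W ⊆ Set.Iic m) :
    BoundaryW m W ↔ ∀ d ∈ Set.Icc 1 m, binomTransform (W.indicator (1 : ℕ → ZMod 2)) d
      = binomTransform (W.indicator 1) m := by
  rw [forall_binomTransform_eq_iff, boundaryW_iff hW]
  refine forall₂_congr fun w _ => ?_
  by_cases hw : w ∈ W <;> by_cases hm : m ∈ W <;> simp [hw, hm]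

end AbelianCode

theorem hammingDist_eq_of_mem_wreathPermSet {α : Type} [DecidableEq α] {m : ℕ}
    {g : Equiv.Perm (Fin m → α)} (hg : g ∈ wreathPermSet α m) (x y : Fin m → α) :
    hammingDist (g x) (g y) = hammingDist x y := by
  obtain ⟨σ, π, hσ⟩ := hg
  rw [funext (hσ x), funext (hσ y)]
  exact (hammingDist_comp (fun k => σ k) fun k => (σ k).injective).trans
    (hammingDist_comp_equiv π⁻¹ x y)

theorem apply_hammingDist_map_eq {ι β κ : Type*} [Fintype ι] [DecidableEq β] {f : ℕ → κ}
    (hf : ∀ d ∈ Set.Icc 1 (Fintype.card ι), f d = f (Fintype.card ι)) (g : Equiv.Perm (ι → β))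
    (x y : ι → β) : f (hammingDist (g x) (g y)) = f (hammingDist x y) := by
  rcases eq_or_ne x y with rfl | hxy
  · simp only [hammingDist_self]
  · have hmem {u v : ι → β} (huv : u ≠ v) : hammingDist u v ∈ Set.Icc 1 (Fintype.card ι) :=
      ⟨hammingDist_pos.2 huv, hammingDist_le_card_fintype⟩
    rw [hf _ (hmem (g.injective.ne hxy)), hf _ (hmem hxy)]

/-- For odd `n ≥ 5`, `m ≥ 1` and `W ⊆ {0, 1, …, m}` not a boundary case,
the automorphism group of the abelian code `C(n, m, W)` is the wreath product `S_n ≀ S_m`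
in its product action on `Z_n^m`; in the boundary cases it is the full symmetric group. -/
theorem statement1 (n m : ℕ) [NeZero n] (hn : 5 ≤ n) (hodd : Odd n) (hm : 1 ≤ m)
    (W : Set ℕ) (hW : W ⊆ Set.Iic m)
    (K : Type) [Field K] [CharP K 2] (α : K) (hα : IsPrimitiveRoot α n) :
    (¬ BoundaryW m W → codeAut (abelianCode n m W K α) = wreathPermSet (ZMod n) m) ∧
    (BoundaryW m W → codeAut (abelianCode n m W K α) = Set.univ) := by
  have hcolour : BoundaryW m W ↔ ∀ d ∈ Set.Icc 1 (Fintype.card (Fin m)),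
      binomTransform (W.indicator (1 : ℕ → ZMod 2)) d
        = binomTransform (W.indicator 1) (Fintype.card (Fin m)) := by
    rw [Fintype.card_fin, boundaryW_iff_forall_binomTransform_eq hW]
  rw [hcolour]
  refine ⟨fun hf => Set.ext fun g => ?_, fun hf => Set.eq_univ_of_forall fun g => ?_⟩
  · rw [mem_codeAut_abelianCode_iff hodd hα]
    push Not at hf
    refine ⟨fun hg => ?_, fun hg x y => by rw [hammingDist_eq_of_mem_wreathPermSet hg]⟩
    exact exists_wreath_of_apply_hammingDist_eq ((ZMod.card n).symm ▸ hn) hf hg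
  · rw [mem_codeAut_abelianCode_iff hodd hα]
    exact apply_hammingDist_map_eq hf g
end
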